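/- arXiv:2605.20122 — 2 statements merged into one kernel-verified Lean document; each statement's English description precedes it below -/
import Mathlib

section
/- Let d ≥ 1 be an integer and let P and Q be (α,C)-controlled probability measures on (0,1)^d for some C > 1 and 0 < α < 1. Then there exists a constant K > 0, depending only on d, C and α, such that for every h > 0 with 1/h a positive integer, W₂²(G_h # P, G_h # Q) ≤ W₂²(P, Q) + K·h^{1+α}. -/
open MeasureTheory
open scoped ENNReal RealInnerProductSpace

noncomputable section

abbrev Euc (d : ℕ) := EuclideanSpace ℝ (Fin d)

/-- The open unit cube `(0,1)^d`. -/
def unitCube (d : ℕ) : Set (Euc d) := {x | ∀ i, x i ∈ Set.Ioo (0 : ℝ) 1}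

/-- `G_h` : map each point to the center of the axis-aligned grid cell
(of side length `h`) containing it. -/
def gridSnap (d : ℕ) (h : ℝ) (x : Euc d) : Euc d :=
  (EuclideanSpace.equiv (Fin d) ℝ).symm fun i => h * ⌊x i / h⌋ + h / 2

/-- Couplings of two Borel (probability) measures: probability measures on
the product with the prescribed marginals. -/
def Couplings {d : ℕ} (P Q : Measure (Euc d)) : Set (Measure (Euc d × Euc d)) :=
  {γ | IsProbabilityMeasure γ ∧ γ.map Prod.fst = P ∧ γ.map Prod.snd = Q}

/-- Squared 2-Wasserstein distance. -/
def W2sq {d : ℕ} (P Q : Measure (Euc d)) : ℝ :=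
  sInf {r | ∃ γ ∈ Couplings P Q, r = ∫ p, ‖p.1 - p.2‖ ^ 2 ∂γ}

/-- 2-Wasserstein distance. -/
def W2 {d : ℕ} (P Q : Measure (Euc d)) : ℝ := Real.sqrt (W2sq P Q)

/-- `P` and `Q` are `(α, C)`-controlled probability measures on `(0,1)^d`:
they possess densities `μ, ν` w.r.t. Lebesgue measure on `(0,1)^d` whose
`α`-Hölder seminorms sum to at most `C`, and which are bounded between
`C⁻¹` and `C`. -/
def IsControlled (d : ℕ) (α C : ℝ) (P Q : Measure (Euc d)) : Prop :=
  ∃ μ ν : Euc d → ℝ,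
    P = (volume.restrict (unitCube d)).withDensity (fun x => ENNReal.ofReal (μ x)) ∧
    Q = (volume.restrict (unitCube d)).withDensity (fun x => ENNReal.ofReal (ν x)) ∧
    (∃ Cμ Cν : ℝ, 0 ≤ Cμ ∧ 0 ≤ Cν ∧ Cμ + Cν ≤ C ∧
      (∀ x ∈ unitCube d, ∀ y ∈ unitCube d, |μ x - μ y| ≤ Cμ * ‖x - y‖ ^ α) ∧
      (∀ x ∈ unitCube d, ∀ y ∈ unitCube d, |ν x - ν y| ≤ Cν * ‖x - y‖ ^ α)) ∧
    (∀ x ∈ unitCube d, C⁻¹ ≤ μ x ∧ μ x ≤ C) ∧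
    (∀ x ∈ unitCube d, C⁻¹ ≤ ν x ∧ ν x ≤ C)

/-- Transport plans between finitely supported weights `p` and `q`. -/
structure IsPlan {ι κ : Type*} [Fintype ι] [Fintype κ] (p : ι → ℝ) (q : κ → ℝ)
    (π : ι → κ → ℝ) : Prop where
  nonneg : ∀ a b, 0 ≤ π a b
  row : ∀ a, ∑ b, π a b = p a
  col : ∀ b, ∑ a, π a b = q b

namespace IsPlan

variable {ι κ : Type*} [Fintype ι] [Fintype κ] {p : ι → ℝ} {q : κ → ℝ} {π : ι → κ → ℝ}

theorem transpose (hπ : IsPlan p q π) : IsPlan q p (fun b a => π a b) :=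
  ⟨fun b a => hπ.nonneg a b, hπ.col, hπ.row⟩

theorem sum_mul_left (hπ : IsPlan p q π) (f : ι → ℝ) :
    ∑ a, ∑ b, f a * π a b = ∑ a, p a * f a := by
  refine Finset.sum_congr rfl fun a _ => ?_
  rw [← Finset.mul_sum, hπ.row, mul_comm]

theorem sum_mul_right (hπ : IsPlan p q π) (f : κ → ℝ) :
    ∑ a, ∑ b, f b * π a b = ∑ b, q b * f b := by
  rw [Finset.sum_comm]
  exact hπ.transpose.sum_mul_left f

theorem exists_minimizer (hp : ∀ a, 0 ≤ p a) (hq : ∀ b, 0 ≤ q b) (hp1 : ∑ a, p a = 1)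
    (hq1 : ∑ b, q b = 1) (c : ι → κ → ℝ) :
    ∃ π, IsPlan p q π ∧ ∀ π', IsPlan p q π' →
      ∑ a, ∑ b, c a b * π a b ≤ ∑ a, ∑ b, c a b * π' a b := by
  have hcomp : IsCompact {π : ι → κ → ℝ | IsPlan p q π} := by
    refine (isCompact_Icc (a := (0 : ι → κ → ℝ)) (b := fun a _ => p a)).of_isClosed_subset ?_ ?_
    · have : {π : ι → κ → ℝ | IsPlan p q π} =
          (⋂ a, ⋂ b, {π | 0 ≤ π a b}) ∩ (⋂ a, {π | ∑ b, π a b = p a}) ∩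
            (⋂ b, {π | ∑ a, π a b = q b}) := by
        ext π
        simp only [Set.mem_ofPred_eq, Set.mem_inter_iff, Set.mem_iInter]
        exact ⟨fun h => ⟨⟨h.nonneg, h.row⟩, h.col⟩, fun h => ⟨h.1.1, h.1.2, h.2⟩⟩
      rw [this]
      refine ((isClosed_iInter fun a => isClosed_iInter fun b => ?_).inter
        (isClosed_iInter fun a => ?_)).inter (isClosed_iInter fun b => ?_)
      · exact isClosed_le continuous_const (by fun_prop)
      · exact isClosed_eq (by fun_prop) continuous_const
      · exact isClosed_eq (by fun_prop) continuous_const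
    · intro π hπ
      refine ⟨fun a b => hπ.nonneg a b, fun a b => ?_⟩
      change π a b ≤ p a
      rw [← hπ.row a]
      exact Finset.single_le_sum (f := fun b => π a b) (fun b _ => hπ.nonneg a b)
        (Finset.mem_univ b)
  have hne : {π : ι → κ → ℝ | IsPlan p q π}.Nonempty :=
    ⟨fun a b => p a * q b, fun a b => mul_nonneg (hp a) (hq b),
      fun a => by rw [← Finset.mul_sum, hq1, mul_one],
      fun b => by rw [← Finset.sum_mul, hp1, one_mul]⟩
  obtain ⟨π, hπ, hmin⟩ := hcomp.exists_isMinOn hne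
    (f := fun π => ∑ a, ∑ b, c a b * π a b) (by fun_prop)
  exact ⟨π, hπ, fun π' hπ' => hmin hπ'⟩

/-- The support of an optimal plan is `c`-monotone. -/
theorem swap_le (hπ : IsPlan p q π) {c : ι → κ → ℝ}
    (hmin : ∀ π', IsPlan p q π' → ∑ a, ∑ b, c a b * π a b ≤ ∑ a, ∑ b, c a b * π' a b)
    {a a' : ι} {b b' : κ} (hab : 0 < π a b) (hab' : 0 < π a' b') :
    c a b + c a' b' ≤ c a b' + c a' b := by
  classical
  by_cases ha : a = a'
  · subst ha; linarith
  by_cases hb : b = b'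
  · subst hb; linarith
  set ε := min (π a b) (π a' b') with hε
  have hε0 : 0 < ε := lt_min hab hab'
  let u : ι → ℝ := fun x => Pi.single (M := fun _ => ℝ) a 1 x - Pi.single (M := fun _ => ℝ) a' 1 x
  let w : κ → ℝ := fun y => Pi.single (M := fun _ => ℝ) b' 1 y - Pi.single (M := fun _ => ℝ) b 1 y
  have hu : ∑ x, u x = 0 := by simp [u]
  have hw : ∑ y, w y = 0 := by simp [w]
  have hplan : IsPlan p q (fun x y => π x y + ε * (u x * w y)) := by
    refine ⟨fun x y => ?_, fun x => ?_, fun y => ?_⟩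
    · have h0 := hπ.nonneg x y
      have h1 : ε ≤ π a b := min_le_left _ _
      have h2 : ε ≤ π a' b' := min_le_right _ _
      simp only [u, w, Pi.single_apply]
      by_cases e1 : x = a
      · subst e1
        by_cases e3 : y = b
        · subst e3; simp [ha, hb]; linarith
        · by_cases e4 : y = b'
          · subst e4; simp [ha, e3]; linarith
          · simp [e3, e4, h0]
      · by_cases e2 : x = a'
        · subst e2
          by_cases e3 : y = b
          · subst e3; simp [e1, hb]; linarith
          · by_cases e4 : y = b'
            · subst e4; simp [e1, e3]; linarith
            · simp [e3, e4, h0]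
        · simp [e1, e2, h0]
    · rw [Finset.sum_add_distrib, ← Finset.mul_sum, ← Finset.mul_sum, hw, hπ.row]; ring
    · rw [Finset.sum_add_distrib, ← Finset.mul_sum, ← Finset.sum_mul, hu, hπ.col]; ring
  have hval : ∑ x, ∑ y, c x y * (π x y + ε * (u x * w y)) =
      ∑ x, ∑ y, c x y * π x y + ε * (c a b' + c a' b - c a b - c a' b') := by
    have key : ∑ x, ∑ y, c x y * (u x * w y) = c a b' + c a' b - c a b - c a' b' := by
      have h1 : ∀ x, ∑ y, c x y * (u x * w y) = u x * (c x b' - c x b) := by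
        intro x
        simp only [w, Pi.single_apply, mul_sub, Finset.sum_sub_distrib, mul_ite, mul_one, mul_zero,
          Finset.sum_ite_eq', Finset.mem_univ, if_true]
        ring
      rw [Finset.sum_congr rfl fun x _ => h1 x]
      simp only [u, Pi.single_apply, sub_mul, Finset.sum_sub_distrib, ite_mul, one_mul,
        zero_mul, Finset.sum_ite_eq', Finset.mem_univ, if_true]
      ring
    rw [← key, Finset.mul_sum, ← Finset.sum_add_distrib]
    refine Finset.sum_congr rfl fun x _ => ?_
    rw [Finset.mul_sum, ← Finset.sum_add_distrib]
    refine Finset.sum_congr rfl fun y _ => ?_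
    ring
  have h := hmin _ hplan
  rw [hval] at h
  have : 0 ≤ c a b' + c a' b - c a b - c a' b' := by
    by_contra hneg
    push Not at hneg
    nlinarith
  linarith

/-- Conditional means of a plan are ordered as soon as the values on the supports are. -/
theorem mean_le_mean (hπ : IsPlan p q π) {a a' : ι} (ha : 0 < p a) (ha' : 0 < p a') {f : κ → ℝ}
    (hf : ∀ b b', 0 < π a b → 0 < π a' b' → f b ≤ f b') :
    (∑ b, f b * π a b) / p a ≤ (∑ b, f b * π a' b) / p a' := by
  rw [div_le_div_iff₀ ha ha', ← hπ.row a, ← hπ.row a', Finset.sum_mul_sum, Finset.sum_mul_sum,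
    Finset.sum_comm (f := fun i j => f i * π a' i * π a j)]
  refine Finset.sum_le_sum fun b _ => Finset.sum_le_sum fun b' _ => ?_
  rcases (hπ.nonneg a b).eq_or_lt with h | h
  · simp [← h]
  rcases (hπ.nonneg a' b').eq_or_lt with h' | h'
  · simp [← h']
  have := mul_le_mul_of_nonneg_right (hf b b' h h') (mul_pos h h').le
  linarith

end IsPlan

/-- Signed distance from the `t`-th point of the grid of step `1 / (L * N)` to the center of the
cell of side `1 / L` containing it. -/
def gridOffset (L N : ℕ) (t : Fin (L * N)) : ℝ :=
  ((t : ℝ) + 1 / 2) / (L * N : ℕ) - (((t : ℕ) / N : ℕ) + 1 / 2) / L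

theorem gridOffset_finProdFinEquiv {L N : ℕ} (hL : 0 < L) (hN : 0 < N) (k : Fin L) (r : Fin N) :
    gridOffset L N (finProdFinEquiv (k, r)) = ((r : ℝ) + 1 / 2 - N / 2) / (L * N) := by
  have h1 : ((finProdFinEquiv (k, r) : Fin (L * N)) : ℕ) = r + N * k := rfl
  have h2 : (r + N * k : ℕ) / N = k := by
    rw [Nat.add_mul_div_left _ _ hN, Nat.div_eq_of_lt r.2, zero_add]
  have hL' : (L : ℝ) ≠ 0 := by positivity
  have hN' : (N : ℝ) ≠ 0 := by positivity
  rw [gridOffset, h1, h2]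
  push_cast
  field_simp
  ring

theorem abs_gridOffset_le {L N : ℕ} (hL : 0 < L) (hN : 0 < N) (t : Fin (L * N)) :
    |gridOffset L N t| ≤ 1 / (2 * L) := by
  obtain ⟨⟨k, r⟩, rfl⟩ := finProdFinEquiv.surjective t
  rw [gridOffset_finProdFinEquiv hL hN, abs_div, abs_of_pos (by positivity : (0 : ℝ) < L * N),
    div_le_div_iff₀ (by positivity) (by positivity)]
  have hr : (r : ℝ) + 1 ≤ N := by exact_mod_cast r.2
  have hr0 : (0 : ℝ) ≤ r := by positivity
  have : |(r : ℝ) + 1 / 2 - N / 2| ≤ N / 2 := by rw [abs_le]; constructor <;> linarith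
  nlinarith [show (0 : ℝ) < L by positivity]

theorem sum_gridOffset {L N : ℕ} (hL : 0 < L) (hN : 0 < N) (k : Fin L) :
    ∑ r : Fin N, gridOffset L N (finProdFinEquiv (k, r)) = 0 := by
  simp only [gridOffset_finProdFinEquiv hL hN]
  rw [← Finset.sum_div, Fin.sum_univ_eq_sum_range (fun r : ℕ => (r : ℝ) + 1 / 2 - N / 2) N]
  have : ∀ n : ℕ, ∑ r ∈ Finset.range n, ((r : ℝ) + 1 / 2 - N / 2) = n * (n - N) / 2 := by
    intro n
    induction n with
    | zero => simp
    | succ n ih => rw [Finset.sum_range_succ, ih]; push_cast; ring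
  rw [this]; simp

/-- The oscillations of a monotone `[0, 1]`-valued function over consecutive blocks add up to at
most one. -/
theorem sum_block_oscillation_le {L N : ℕ} (hN : 0 < N) {T : Fin (L * N) → ℝ} (hT : Monotone T)
    (hT0 : ∀ t, 0 ≤ T t) (hT1 : ∀ t, T t ≤ 1) :
    ∑ k : Fin L, (T (finProdFinEquiv (k, ⟨N - 1, by lia⟩)) - T (finProdFinEquiv (k, ⟨0, hN⟩))) ≤
      1 := by
  let S : ℕ → ℝ := fun k => if h : k < L then T (finProdFinEquiv (⟨k, h⟩, ⟨0, hN⟩)) else 1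
  have hstep : ∀ k : Fin L, T (finProdFinEquiv (k, ⟨N - 1, by lia⟩)) -
      T (finProdFinEquiv (k, ⟨0, hN⟩)) ≤ S (k + 1) - S k := by
    intro k
    have hk : S k = T (finProdFinEquiv (k, ⟨0, hN⟩)) := by simp [S]
    rw [hk]
    refine sub_le_sub_right ?_ _
    by_cases h : (k : ℕ) + 1 < L
    · simp only [S, h, dif_pos]
      refine hT ?_
      rw [Fin.le_def, finProdFinEquiv_apply_val, finProdFinEquiv_apply_val]
      simp only [Nat.mul_add]
      lia
    · simp only [S, h, dif_neg, not_false_eq_true]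
      exact hT1 _
  refine (Finset.sum_le_sum fun k _ => hstep k).trans ?_
  rw [Fin.sum_univ_eq_sum_range (fun k : ℕ => S (k + 1) - S k) L, Finset.sum_range_sub]
  have h0 : 0 ≤ S 0 := by
    by_cases h : 0 < L
    · simp only [S, h, dif_pos]; exact hT0 _
    · simp [S, h]
  have h1 : S L = 1 := by simp [S]
  linarith

theorem abs_sum_gridOffset_le {L N : ℕ} (hL : 0 < L) (hN : 0 < N) {p T : Fin (L * N) → ℝ}
    {A E : ℝ} (hT : Monotone T) (hT0 : ∀ t, 0 ≤ T t) (hT1 : ∀ t, T t ≤ 1)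
    (hp0 : ∀ t, 0 ≤ p t) (hpA : ∀ t, p t ≤ A)
    (hpE : ∀ t t' : Fin (L * N), (t : ℕ) / N = (t' : ℕ) / N → |p t - p t'| ≤ E) :
    |∑ t, p t * (gridOffset L N t * T t)| ≤ 1 / (2 * L) * ((L * N) * E + N * A) := by
  rw [← finProdFinEquiv.sum_comp, Fintype.sum_prod_type]
  have hval : ∀ (k : Fin L) (r : Fin N),
      ((finProdFinEquiv (k, r) : Fin (L * N)) : ℕ) / N = k := by
    intro k r
    rw [finProdFinEquiv_apply_val, Nat.add_mul_div_left _ _ hN, Nat.div_eq_of_lt r.2, zero_add]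
  have hA : 0 ≤ A := (hp0 ⟨0, by positivity⟩).trans (hpA _)
  have hblock : ∀ k : Fin L,
      |∑ r : Fin N, p (finProdFinEquiv (k, r)) *
        (gridOffset L N (finProdFinEquiv (k, r)) * T (finProdFinEquiv (k, r)))| ≤
      1 / (2 * L) * (N * (E + A * (T (finProdFinEquiv (k, ⟨N - 1, by lia⟩)) -
        T (finProdFinEquiv (k, ⟨0, hN⟩))))) := by
    intro k
    set t : Fin N → Fin (L * N) := fun r => finProdFinEquiv (k, r)
    set z : Fin N := ⟨0, hN⟩
    have hmono : Monotone t := by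
      intro r r' h
      rw [Fin.le_def, finProdFinEquiv_apply_val, finProdFinEquiv_apply_val]
      simpa using h
    have hrw : ∑ r : Fin N, p (t r) * (gridOffset L N (t r) * T (t r)) =
        ∑ r : Fin N, gridOffset L N (t r) * (p (t r) * T (t r) - p (t z) * T (t z)) := by
      simp only [mul_sub, Finset.sum_sub_distrib]
      rw [← Finset.sum_mul, sum_gridOffset hL hN k, zero_mul, sub_zero]
      exact Finset.sum_congr rfl fun r _ => by ring
    change |∑ r : Fin N, p (t r) * (gridOffset L N (t r) * T (t r))| ≤ _
    rw [hrw]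
    refine (Finset.abs_sum_le_sum_abs _ _).trans ?_
    have hterm : ∀ r : Fin N, |gridOffset L N (t r) * (p (t r) * T (t r) - p (t z) * T (t z))| ≤
        1 / (2 * L) * (E + A * (T (t ⟨N - 1, by lia⟩) - T (t z))) := by
      intro r
      rw [abs_mul]
      refine mul_le_mul (abs_gridOffset_le hL hN _) ?_ (abs_nonneg _) (by positivity)
      have h1 : p (t r) * T (t r) - p (t z) * T (t z) =
          (p (t r) - p (t z)) * T (t r) + p (t z) * (T (t r) - T (t z)) := by ring
      have h2 : 0 ≤ T (t r) - T (t z) :=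
        sub_nonneg.2 (hT (hmono (by rw [Fin.le_def]; exact Nat.zero_le _)))
      have h3 : T (t r) ≤ T (t ⟨N - 1, by lia⟩) :=
        hT (hmono (by rw [Fin.le_def]; exact Nat.le_sub_one_of_lt r.2))
      have h4 : |p (t r) - p (t z)| ≤ E := hpE _ _ ((hval k r).trans (hval k z).symm)
      rw [h1]
      refine (abs_add_le _ _).trans (add_le_add ?_ ?_)
      · rw [abs_mul, abs_of_nonneg (hT0 _)]
        exact (mul_le_of_le_one_right (abs_nonneg _) (hT1 _)).trans h4
      · rw [abs_of_nonneg (mul_nonneg (hp0 _) h2)]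
        exact mul_le_mul (hpA _) (by linarith) h2 hA
    refine (Finset.sum_le_sum fun r _ => hterm r).trans (le_of_eq ?_)
    rw [Finset.sum_const, Finset.card_univ, Fintype.card_fin, nsmul_eq_mul]
    ring
  refine (Finset.abs_sum_le_sum_abs _ _).trans ((Finset.sum_le_sum fun k _ => hblock k).trans ?_)
  rw [← Finset.mul_sum, ← Finset.mul_sum, Finset.sum_add_distrib, ← Finset.mul_sum,
    Finset.sum_const, Finset.card_univ, Fintype.card_fin, nsmul_eq_mul]
  have hosc := sum_block_oscillation_le hN hT hT0 hT1
  refine mul_le_mul_of_nonneg_left ?_ (by positivity)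
  have := mul_le_mul_of_nonneg_left hosc (mul_nonneg (Nat.cast_nonneg (α := ℝ) N) hA)
  linarith

/-- Weights on the grid of step `1 / (L * N)` which are positive, at most `C` times the volume of a
cell, and oscillate by at most `ε` times that volume inside each cell of side `1 / L`. -/
structure IsGridWeight {d : ℕ} (L N : ℕ) (C ε : ℝ) (p : (Fin d → Fin (L * N)) → ℝ) : Prop where
  pos : ∀ a, 0 < p a
  le : ∀ a, p a ≤ C * (((L * N : ℕ) : ℝ) ^ d)⁻¹
  osc : ∀ a a', (∀ j, (a j : ℕ) / N = (a' j : ℕ) / N) →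
    |p a - p a'| ≤ ε * (((L * N : ℕ) : ℝ) ^ d)⁻¹

theorem IsGridWeight.abs_sum_gridOffset_le {d L N : ℕ} (hL : 0 < L) (hN : 0 < N) {C ε : ℝ}
    {p : (Fin d → Fin (L * N)) → ℝ} (hp : IsGridWeight L N C ε p) (i : Fin d)
    {T : (Fin d → Fin (L * N)) → ℝ} (hT0 : ∀ a, 0 ≤ T a) (hT1 : ∀ a, T a ≤ 1)
    (hT : ∀ a t, a i < t → T a ≤ T (Function.update a i t)) :
    |∑ a, p a * (gridOffset L N (a i) * T a)| ≤ 1 / (2 * L) * (ε + C / L) := by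
  set e := Equiv.funSplitAt i (Fin (L * N))
  set v : ℝ := (((L * N : ℕ) : ℝ) ^ d)⁻¹ with hv
  have hei : ∀ t z, e.symm (t, z) i = t := by intro t z; simp [e, Equiv.funSplitAt]
  have hej : ∀ t z j (h : j ≠ i), e.symm (t, z) j = z ⟨j, h⟩ := by
    intro t z j h; simp [e, Equiv.funSplitAt, h]
  have hupd : ∀ t t' z, e.symm (t', z) = Function.update (e.symm (t, z)) i t' := by
    intro t t' z
    funext j
    by_cases h : j = i
    · subst h; rw [hei, Function.update_self]
    · rw [hej _ _ _ h, Function.update_of_ne h, hej _ _ _ h]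
  rw [← e.symm.sum_comp, Fintype.sum_prod_type_right]
  have hline : ∀ z, |∑ t, p (e.symm (t, z)) *
      (gridOffset L N (e.symm (t, z) i) * T (e.symm (t, z)))| ≤
      1 / (2 * L) * ((L * N) * (ε * v) + N * (C * v)) := by
    intro z
    simp only [hei]
    refine _root_.abs_sum_gridOffset_le hL hN (p := fun t => p (e.symm (t, z)))
      (T := fun t => T (e.symm (t, z))) ?_ (fun t => hT0 _) (fun t => hT1 _)
      (fun t => (hp.pos _).le) (fun t => hp.le _) ?_
    · intro t t' h
      rcases h.eq_or_lt with rfl | h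
      · exact le_rfl
      · change T (e.symm (t, z)) ≤ T (e.symm (t', z))
        rw [hupd t t' z]
        exact hT _ _ (by rwa [hei])
    · intro t t' h
      refine hp.osc _ _ fun j => ?_
      by_cases hj : j = i
      · subst hj; rw [hei, hei]; exact h
      · rw [hej _ _ _ hj, hej _ _ _ hj]
  refine (Finset.abs_sum_le_sum_abs _ _).trans
    ((Finset.sum_le_sum fun z _ => hline z).trans (le_of_eq ?_))
  have hM : (L * N : ℝ) ≠ 0 := by positivity
  have hcard : (Fintype.card ({j // j ≠ i} → Fin (L * N)) : ℝ) * ((L * N) * v) = 1 := by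
    have h1 : Fintype.card (Fin d → Fin (L * N)) =
        L * N * Fintype.card ({j // j ≠ i} → Fin (L * N)) := by
      rw [Fintype.card_congr e, Fintype.card_prod, Fintype.card_fin]
    rw [Fintype.card_fun, Fintype.card_fin, Fintype.card_fin] at h1
    have h2 : ((L * N : ℕ) : ℝ) ^ d =
        (L * N) * (Fintype.card ({j // j ≠ i} → Fin (L * N)) : ℝ) := by exact_mod_cast h1
    have h3 : ((L * N : ℕ) : ℝ) ^ d ≠ 0 := by push_cast; positivity
    rw [mul_left_comm, ← mul_assoc, ← h2, hv, mul_inv_cancel₀ h3]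
  rw [Finset.sum_const, Finset.card_univ, nsmul_eq_mul]
  generalize (Fintype.card ({j // j ≠ i} → Fin (L * N)) : ℝ) = n at hcard ⊢
  have hL' : (L : ℝ) ≠ 0 := by positivity
  calc n * (1 / (2 * L) * ((L * N) * (ε * v) + N * (C * v)))
      = 1 / (2 * L) * (n * ((L * N) * v) * (ε + C / L)) := by field_simp
    _ = _ := by rw [hcard, one_mul]

/-- The `t`-th midpoint of the subdivision of `(0, 1)` into `M` intervals. -/
def gridMid {M : ℕ} (t : Fin M) : ℝ := ((t : ℝ) + 1 / 2) / M

theorem gridMid_nonneg {M : ℕ} (t : Fin M) : 0 ≤ gridMid t := by unfold gridMid; positivity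

theorem gridMid_le_one {M : ℕ} (t : Fin M) : gridMid t ≤ 1 := by
  have h : (t : ℝ) + 1 ≤ M := by exact_mod_cast t.2
  have hM : (0 : ℝ) < M := by linarith [Nat.cast_nonneg (α := ℝ) (t : ℕ)]
  rw [gridMid, div_le_one hM]
  linarith

theorem gridMid_strictMono {M : ℕ} : StrictMono (gridMid (M := M)) := by
  intro t t' h
  have h' : (t : ℝ) < t' := by exact_mod_cast h
  have hM : (0 : ℝ) < M := by exact_mod_cast t.pos
  unfold gridMid
  gcongr

/-- The center of the cell of side `1 / L` containing `gridMid t`. -/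
def coarseMid (L N : ℕ) (t : Fin (L * N)) : ℝ := (((t : ℕ) / N : ℕ) + 1 / 2) / L

theorem gridOffset_eq (L N : ℕ) (t : Fin (L * N)) :
    gridOffset L N t = gridMid t - coarseMid L N t := rfl

theorem IsPlan.abs_sum_gridOffset_mul_gridMid_le {d L N : ℕ} (hL : 0 < L) (hN : 0 < N) {C ε : ℝ}
    {p q : (Fin d → Fin (L * N)) → ℝ} {π : (Fin d → Fin (L * N)) → (Fin d → Fin (L * N)) → ℝ}
    (hp : IsGridWeight L N C ε p) (hπ : IsPlan p q π) (i : Fin d)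
    (hmono : ∀ a t b b', a i < t → 0 < π a b → 0 < π (Function.update a i t) b' → b i ≤ b' i) :
    |∑ a, ∑ b, gridOffset L N (a i) * gridMid (b i) * π a b| ≤ 1 / (2 * L) * (ε + C / L) := by
  have h := hp.abs_sum_gridOffset_le hL hN i (T := fun a => (∑ b, gridMid (b i) * π a b) / p a)
    (fun a => div_nonneg (Finset.sum_nonneg fun b _ =>
      mul_nonneg (gridMid_nonneg _) (hπ.nonneg a b)) (hp.pos a).le)
    (fun a => ?_) (fun a t hat => ?_)
  · convert h using 3 with a
    rw [mul_left_comm, mul_div_cancel₀ _ (hp.pos a).ne', Finset.mul_sum]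
    exact Finset.sum_congr rfl fun b _ => by ring
  · rw [div_le_one (hp.pos a), ← hπ.row a]
    exact Finset.sum_le_sum fun b _ => mul_le_of_le_one_left (hπ.nonneg a b) (gridMid_le_one _)
  · exact hπ.mean_le_mean (hp.pos _) (hp.pos _) fun b b' hb hb' =>
      gridMid_strictMono.monotone (hmono a t b b' hat hb hb')

theorem IsGridWeight.abs_sum_gridOffset_mul_gridMid_le {d L N : ℕ} (hL : 0 < L) (hN : 0 < N)
    {C ε : ℝ} {p : (Fin d → Fin (L * N)) → ℝ} (hp : IsGridWeight L N C ε p) (i : Fin d) :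
    |∑ a, p a * (gridOffset L N (a i) * gridMid (a i))| ≤ 1 / (2 * L) * (ε + C / L) :=
  hp.abs_sum_gridOffset_le hL hN i (T := fun a => gridMid (a i)) (fun _ => gridMid_nonneg _)
    (fun _ => gridMid_le_one _)
    (fun a t h => by simpa using (gridMid_strictMono h).le)

/-- Squared distance between the midpoints of two cells of the fine grid. -/
def fineCost {d M : ℕ} (a b : Fin d → Fin M) : ℝ := ∑ i, (gridMid (a i) - gridMid (b i)) ^ 2

/-- Squared distance between the centers of the coarse cells containing two fine cells. -/
def coarseCost {d L N : ℕ} (a b : Fin d → Fin (L * N)) : ℝ :=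
  ∑ i, (coarseMid L N (a i) - coarseMid L N (b i)) ^ 2

theorem fineCost_comm {d M : ℕ} (a b : Fin d → Fin M) : fineCost a b = fineCost b a :=
  Finset.sum_congr rfl fun i _ => by ring

theorem le_of_fineCost_swap_le {d M : ℕ} {a b b' : Fin d → Fin M} {i : Fin d} {t : Fin M}
    (hat : a i < t)
    (h : fineCost a b + fineCost (Function.update a i t) b' ≤
      fineCost a b' + fineCost (Function.update a i t) b) : b i ≤ b' i := by
  have hsum : fineCost a b' + fineCost (Function.update a i t) b -
      (fineCost a b + fineCost (Function.update a i t) b') =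
      2 * (gridMid t - gridMid (a i)) * (gridMid (b' i) - gridMid (b i)) := by
    simp only [fineCost, ← Finset.sum_add_distrib, ← Finset.sum_sub_distrib]
    rw [Finset.sum_eq_single i]
    · rw [Function.update_self]; ring
    · intro j _ hj
      rw [Function.update_of_ne hj]; ring
    · simp
  have h1 := sub_pos.2 (gridMid_strictMono hat)
  by_contra hlt
  push Not at hlt
  have h2 := sub_pos.2 (gridMid_strictMono hlt)
  nlinarith [mul_pos h1 h2]

theorem IsPlan.sum_coarseCost_le {d L N : ℕ} (hL : 0 < L) (hN : 0 < N) {C ε : ℝ}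
    {p q : (Fin d → Fin (L * N)) → ℝ} {π : (Fin d → Fin (L * N)) → (Fin d → Fin (L * N)) → ℝ}
    (hp : IsGridWeight L N C ε p) (hq : IsGridWeight L N C ε q) (hp1 : ∑ a, p a = 1)
    (hπ : IsPlan p q π)
    (hmin : ∀ π', IsPlan p q π' →
      ∑ a, ∑ b, fineCost a b * π a b ≤ ∑ a, ∑ b, fineCost a b * π' a b) :
    ∑ a, ∑ b, coarseCost a b * π a b ≤
      ∑ a, ∑ b, fineCost a b * π a b + d * (4 / L * (ε + C / L) + (1 / L) ^ 2) := by
  have hswap : ∀ a t b b' i, a i < t → 0 < π a b → 0 < π (Function.update a i t) b' → b i ≤ b' i :=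
    fun a t b b' i hat hb hb' => le_of_fineCost_swap_le hat (hπ.swap_le hmin hb hb')
  have hswap' : ∀ a t b b' i, a i < t → 0 < π b a → 0 < π b' (Function.update a i t) →
      b i ≤ b' i := fun a t b b' i hat hb hb' => le_of_fineCost_swap_le hat (by
    have := hπ.swap_le hmin hb hb'
    rw [fineCost_comm b, fineCost_comm b', fineCost_comm b, fineCost_comm b'] at this
    linarith)
  have hcoord : ∀ i : Fin d,
      ∑ a, ∑ b, (coarseMid L N (a i) - coarseMid L N (b i)) ^ 2 * π a b ≤
      ∑ a, ∑ b, (gridMid (a i) - gridMid (b i)) ^ 2 * π a b +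
        (4 / L * (ε + C / L) + (1 / L) ^ 2) := by
    intro i
    have h1 := hp.abs_sum_gridOffset_mul_gridMid_le hL hN i
    have h2 := hq.abs_sum_gridOffset_mul_gridMid_le hL hN i
    have h3 := hπ.abs_sum_gridOffset_mul_gridMid_le hL hN hp i
      (fun a t b b' => hswap a t b b' i)
    have h4 := hπ.transpose.abs_sum_gridOffset_mul_gridMid_le hL hN hq i
      (fun a t b b' => hswap' a t b b' i)
    rw [Finset.sum_comm] at h4
    rw [← hπ.sum_mul_left] at h1
    rw [← hπ.sum_mul_right] at h2
    have h5 : ∑ a, ∑ b, (1 / (L : ℝ)) ^ 2 * π a b = (1 / (L : ℝ)) ^ 2 := by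
      rw [hπ.sum_mul_left (fun _ => (1 / (L : ℝ)) ^ 2), ← Finset.sum_mul, hp1, one_mul]
    have hpt : ∑ a, ∑ b, (coarseMid L N (a i) - coarseMid L N (b i)) ^ 2 * π a b ≤
        ∑ a, ∑ b, (gridMid (a i) - gridMid (b i)) ^ 2 * π a b +
        (2 * ∑ a, ∑ b, gridOffset L N (a i) * gridMid (b i) * π a b
          + 2 * ∑ a, ∑ b, gridOffset L N (b i) * gridMid (a i) * π a b
          - 2 * ∑ a, ∑ b, gridOffset L N (a i) * gridMid (a i) * π a b
          - 2 * ∑ a, ∑ b, gridOffset L N (b i) * gridMid (b i) * π a b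
          + ∑ a, ∑ b, (1 / (L : ℝ)) ^ 2 * π a b) := by
      simp only [Finset.mul_sum, ← Finset.sum_add_distrib, ← Finset.sum_sub_distrib]
      refine Finset.sum_le_sum fun a _ => Finset.sum_le_sum fun b _ => ?_
      have ha := gridOffset_eq L N (a i)
      have hb := gridOffset_eq L N (b i)
      have hsq : (gridOffset L N (a i) - gridOffset L N (b i)) ^ 2 ≤ (1 / (L : ℝ)) ^ 2 := by
        refine sq_le_sq' ?_ ?_ <;>
        · have h1 := abs_le.1 (abs_gridOffset_le hL hN (a i))
          have h2 := abs_le.1 (abs_gridOffset_le hL hN (b i))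
          have h3 : (1 : ℝ) / L = 1 / (2 * L) + 1 / (2 * L) := by field_simp; norm_num
          linarith [h1.1, h1.2, h2.1, h2.2]
      have hm := mul_le_mul_of_nonneg_right hsq (hπ.nonneg a b)
      have hca : coarseMid L N (a i) = gridMid (a i) - gridOffset L N (a i) := by linarith
      have hcb : coarseMid L N (b i) = gridMid (b i) - gridOffset L N (b i) := by linarith
      rw [hca, hcb]
      linarith
    refine hpt.trans (add_le_add_right ?_ _)
    have h6 : 4 / (L : ℝ) * (ε + C / L) = 8 * (1 / (2 * L) * (ε + C / L)) := by
      have : (L : ℝ) ≠ 0 := by positivity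
      field_simp; ring
    rw [h5, h6]
    linarith [(abs_le.1 h1).1, (abs_le.1 h2).1, (abs_le.1 h3).2, (abs_le.1 h4).2]
  have hsplit : ∀ f : (Fin d → Fin (L * N)) → (Fin d → Fin (L * N)) → Fin d → ℝ,
      ∑ a, ∑ b, (∑ i, f a b i) * π a b = ∑ i, ∑ a, ∑ b, f a b i * π a b := by
    intro f
    simp only [Finset.sum_mul]
    rw [Finset.sum_comm]
    rw [Finset.sum_congr rfl fun b _ => Finset.sum_comm, Finset.sum_comm]
    exact Finset.sum_congr rfl fun i _ => Finset.sum_comm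
  simp only [coarseCost, fineCost, hsplit]
  refine (Finset.sum_le_sum fun i _ => hcoord i).trans (le_of_eq ?_)
  rw [Finset.sum_add_distrib, Finset.sum_const, Finset.card_univ, Fintype.card_fin, nsmul_eq_mul]

/-- Index of the cell of side `1 / M` containing a point of the unit cube. -/
def cellIdx (d M : ℕ) [NeZero M] (x : Euc d) : Fin d → Fin M :=
  fun i => Fin.ofNat M ⌊x i * M⌋₊

theorem measurable_cellIdx (d M : ℕ) [NeZero M] : Measurable (cellIdx d M) := by
  refine measurable_pi_iff.2 fun i => ?_
  have h : Measurable fun x : Euc d => ⌊x i * M⌋₊ := by fun_prop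
  exact (Measurable.of_discrete (f := Fin.ofNat M)).comp h

theorem cellIdx_val {d M : ℕ} [NeZero M] {x : Euc d} (hx : x ∈ unitCube d) (i : Fin d) :
    (cellIdx d M x i : ℕ) = ⌊x i * M⌋₊ := by
  have hM : (0 : ℝ) < M := by exact_mod_cast NeZero.pos M
  refine Nat.mod_eq_of_lt ((Nat.floor_lt (mul_nonneg (hx i).1.le hM.le)).2 ?_)
  exact mul_lt_of_lt_one_left hM (hx i).2

theorem mem_cell_iff {d M : ℕ} [NeZero M] (a : Fin d → Fin M) (x : Euc d) :
    x ∈ cellIdx d M ⁻¹' {a} ∩ unitCube d ↔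
      ∀ i, 0 < x i ∧ (a i : ℝ) / M ≤ x i ∧ x i < ((a i : ℝ) + 1) / M := by
  have hM : (0 : ℝ) < M := by exact_mod_cast NeZero.pos M
  constructor
  · rintro ⟨rfl, hx⟩ i
    rw [cellIdx_val hx, div_le_iff₀ hM, lt_div_iff₀ hM]
    exact ⟨(hx i).1, Nat.floor_le (mul_nonneg (hx i).1.le hM.le), Nat.lt_floor_add_one _⟩
  · intro h
    have hx : x ∈ unitCube d := fun i => by
      refine ⟨(h i).1, (h i).2.2.trans_le ?_⟩
      rw [div_le_one hM]
      exact_mod_cast (a i).2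
    refine ⟨?_, hx⟩
    funext i
    refine Fin.ext ?_
    have h1 := (h i).2.1
    have h2 := (h i).2.2
    rw [div_le_iff₀ hM] at h1
    rw [lt_div_iff₀ hM] at h2
    rw [cellIdx_val hx, Nat.floor_eq_iff (mul_nonneg (hx i).1.le hM.le)]
    exact ⟨h1, h2⟩

theorem volume_cell {d M : ℕ} [NeZero M] (a : Fin d → Fin M) :
    volume (cellIdx d M ⁻¹' {a} ∩ unitCube d) = ENNReal.ofReal (((M : ℝ) ^ d)⁻¹) := by
  have hM : (0 : ℝ) < M := by exact_mod_cast NeZero.pos M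
  have hset : cellIdx d M ⁻¹' {a} ∩ unitCube d = WithLp.ofLp ⁻¹' Set.univ.pi
      (fun i => {t : ℝ | 0 < t ∧ (a i : ℝ) / M ≤ t ∧ t < ((a i : ℝ) + 1) / M}) := by
    ext x
    rw [mem_cell_iff]
    simp
  have hJ : ∀ k : ℕ, volume {t : ℝ | 0 < t ∧ (k : ℝ) / M ≤ t ∧ t < ((k : ℝ) + 1) / M} =
      ENNReal.ofReal ((M : ℝ)⁻¹) := by
    intro k
    have hlen : ((k : ℝ) + 1) / M - k / M = (M : ℝ)⁻¹ := by field_simp; ring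
    refine le_antisymm ?_ ?_
    · rw [← hlen, ← Real.volume_Ico]
      exact measure_mono fun t ht => ht.2
    · rw [← hlen, ← Real.volume_Ioo]
      exact measure_mono fun t ht => ⟨lt_of_le_of_lt (by positivity) ht.1, ht.1.le, ht.2⟩
  have hpre := (EuclideanSpace.volume_preserving_symm_measurableEquiv_toLp
    (Fin d)).measure_preimage_equiv (Set.univ.pi
      (fun i => {t : ℝ | 0 < t ∧ (a i : ℝ) / M ≤ t ∧ t < ((a i : ℝ) + 1) / M}))
  rw [hset]
  refine hpre.trans ?_
  rw [volume_pi_pi]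
  simp only [hJ, Finset.prod_const, Finset.card_univ, Fintype.card_fin]
  rw [← ENNReal.ofReal_pow (by positivity), inv_pow]

theorem measurableSet_unitCube (d : ℕ) : MeasurableSet (unitCube d) := by
  have : unitCube d = ⋂ i, (fun x : Euc d => x i) ⁻¹' Set.Ioo 0 1 := by
    ext x; simp [unitCube]
  rw [this]
  exact MeasurableSet.iInter fun i => measurableSet_Ioo.preimage (by fun_prop)

section Density

variable {d M : ℕ} [NeZero M] {P : Measure (Euc d)} {μ : Euc d → ℝ}

theorem measure_cell_eq
    (hP : P = (volume.restrict (unitCube d)).withDensity fun x => ENNReal.ofReal (μ x))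
    (a : Fin d → Fin M) :
    P (cellIdx d M ⁻¹' {a}) =
      ∫⁻ x in cellIdx d M ⁻¹' {a} ∩ unitCube d, ENNReal.ofReal (μ x) := by
  have hm : MeasurableSet (cellIdx d M ⁻¹' {a}) :=
    measurable_cellIdx d M (measurableSet_singleton a)
  rw [hP, withDensity_apply _ hm, Measure.restrict_restrict hm]

theorem measurableSet_cell (a : Fin d → Fin M) :
    MeasurableSet (cellIdx d M ⁻¹' {a} ∩ unitCube d) :=
  (measurable_cellIdx d M (measurableSet_singleton a)).inter (measurableSet_unitCube d)

theorem le_measureReal_cell [IsFiniteMeasure P]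
    (hP : P = (volume.restrict (unitCube d)).withDensity fun x => ENNReal.ofReal (μ x))
    (a : Fin d → Fin M) {c : ℝ} (hc : ∀ x ∈ cellIdx d M ⁻¹' {a} ∩ unitCube d, c ≤ μ x) :
    c * ((M : ℝ) ^ d)⁻¹ ≤ P.real (cellIdx d M ⁻¹' {a}) := by
  rw [Measure.real, ← ENNReal.ofReal_le_iff_le_toReal (measure_ne_top _ _),
    ENNReal.ofReal_mul' (by positivity), ← volume_cell a, ← setLIntegral_const, measure_cell_eq hP]
  exact setLIntegral_mono' (measurableSet_cell a) fun x hx => ENNReal.ofReal_le_ofReal (hc x hx)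

theorem measureReal_cell_le
    (hP : P = (volume.restrict (unitCube d)).withDensity fun x => ENNReal.ofReal (μ x))
    (a : Fin d → Fin M) {c : ℝ} (hc0 : 0 ≤ c)
    (hc : ∀ x ∈ cellIdx d M ⁻¹' {a} ∩ unitCube d, μ x ≤ c) :
    P.real (cellIdx d M ⁻¹' {a}) ≤ c * ((M : ℝ) ^ d)⁻¹ := by
  refine ENNReal.toReal_le_of_le_ofReal (by positivity) ?_
  rw [ENNReal.ofReal_mul' (by positivity), ← volume_cell a, ← setLIntegral_const, measure_cell_eq hP]
  exact setLIntegral_mono' (measurableSet_cell a) fun x hx => ENNReal.ofReal_le_ofReal (hc x hx)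

end Density

theorem norm_sub_le_of_forall_abs_sub_le {d : ℕ} {x y : Euc d} {r : ℝ} (hr : 0 ≤ r)
    (h : ∀ i, |x i - y i| ≤ r) : ‖x - y‖ ≤ √d * r := by
  rw [EuclideanSpace.norm_eq]
  refine Real.sqrt_le_iff.2 ⟨by positivity, ?_⟩
  calc ∑ i, ‖(x - y) i‖ ^ 2 ≤ ∑ _i : Fin d, r ^ 2 :=
        Finset.sum_le_sum fun i _ => pow_le_pow_left₀ (norm_nonneg _) (h i) 2
    _ = (√d * r) ^ 2 := by
        rw [mul_pow, Real.sq_sqrt (Nat.cast_nonneg d)]; simp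

theorem isGridWeight_of_holder {d L N : ℕ} [NeZero (L * N)] (hL : 0 < L) (hN : 0 < N) {α C : ℝ}
    (hα : 0 ≤ α) (hC : 0 < C) {P : Measure (Euc d)} [IsProbabilityMeasure P] {μ : Euc d → ℝ}
    (hP : P = (volume.restrict (unitCube d)).withDensity fun x => ENNReal.ofReal (μ x))
    (hμ : ∀ x ∈ unitCube d, ∀ y ∈ unitCube d, |μ x - μ y| ≤ C * ‖x - y‖ ^ α)
    (hbd : ∀ x ∈ unitCube d, C⁻¹ ≤ μ x ∧ μ x ≤ C) :
    IsGridWeight L N C (C * (√d * (1 / L)) ^ α)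
      (fun a => P.real (cellIdx d (L * N) ⁻¹' {a})) := by
  have hL' : (0 : ℝ) < L := by exact_mod_cast hL
  have hN' : (0 : ℝ) < N := by exact_mod_cast hN
  have hv : (0 : ℝ) < (((L * N : ℕ) : ℝ) ^ d)⁻¹ := by push_cast; positivity
  have hosc : ∀ a a' : Fin d → Fin (L * N), (∀ j, (a j : ℕ) / N = (a' j : ℕ) / N) →
      P.real (cellIdx d (L * N) ⁻¹' {a}) - P.real (cellIdx d (L * N) ⁻¹' {a'}) ≤
        C * (√d * (1 / L)) ^ α * (((L * N : ℕ) : ℝ) ^ d)⁻¹ := by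
    intro a a' haa'
    have hclose : ∀ x ∈ cellIdx d (L * N) ⁻¹' {a} ∩ unitCube d,
        ∀ y ∈ cellIdx d (L * N) ⁻¹' {a'} ∩ unitCube d, μ x ≤ μ y + C * (√d * (1 / L)) ^ α := by
      intro x hx y hy
      have hnorm : ‖x - y‖ ≤ √d * (1 / L) := by
        refine norm_sub_le_of_forall_abs_sub_le (by positivity) fun i => ?_
        have key : ∀ (b : Fin d → Fin (L * N)) (z : Euc d),
            z ∈ cellIdx d (L * N) ⁻¹' {b} ∩ unitCube d →
            (((b i : ℕ) / N : ℕ) : ℝ) / L ≤ z i ∧ z i ≤ ((((b i : ℕ) / N : ℕ) : ℝ) + 1) / L := by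
          intro b z hz
          obtain ⟨-, h1, h2⟩ := (mem_cell_iff b z).1 hz i
          have e1 : (((b i : ℕ) / N : ℕ) : ℝ) * N ≤ (b i : ℕ) := by
            exact_mod_cast Nat.div_mul_le_self _ _
          have e2 : ((b i : ℕ) : ℝ) + 1 ≤ ((((b i : ℕ) / N : ℕ) : ℝ) + 1) * N := by
            exact_mod_cast Nat.succ_le_of_lt (Nat.lt_mul_of_div_lt (Nat.lt_succ_self _) hN)
          push_cast at h1 h2
          constructor
          · refine le_trans ?_ h1
            rw [div_le_div_iff₀ hL' (by positivity)]
            nlinarith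
          · refine h2.le.trans ?_
            rw [div_le_div_iff₀ (by positivity) hL']
            nlinarith
        obtain ⟨x1, x2⟩ := key a x hx
        obtain ⟨y1, y2⟩ := key a' y hy
        rw [haa' i, add_div] at x2
        rw [haa' i] at x1
        rw [add_div] at y2
        rw [abs_le]
        constructor <;> linarith
      have h1 := (le_abs_self _).trans (hμ x hx.2 y hy.2)
      have h2 : C * ‖x - y‖ ^ α ≤ C * (√d * (1 / L)) ^ α := by gcongr
      linarith
    have hbound : ∀ y ∈ cellIdx d (L * N) ⁻¹' {a'} ∩ unitCube d,
        P.real (cellIdx d (L * N) ⁻¹' {a}) / (((L * N : ℕ) : ℝ) ^ d)⁻¹ -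
          C * (√d * (1 / L)) ^ α ≤ μ y := by
      intro y hy
      have hpos : 0 ≤ μ y + C * (√d * (1 / L)) ^ α :=
        add_nonneg ((inv_nonneg.2 hC.le).trans (hbd y hy.2).1) (by positivity)
      have := measureReal_cell_le hP a hpos fun x hx => hclose x hx y hy
      rw [← div_le_iff₀ hv] at this
      linarith
    have := le_measureReal_cell hP a' hbound
    rw [sub_mul, div_mul_cancel₀ _ hv.ne'] at this
    linarith
  refine ⟨fun a => ?_, fun a => ?_, fun a a' h => abs_le.2 ⟨?_, hosc a a' h⟩⟩
  · exact (mul_pos (inv_pos.2 hC) hv).trans_le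
      (le_measureReal_cell hP a fun x hx => (hbd x hx.2).1)
  · exact measureReal_cell_le hP a hC.le fun x hx => (hbd x hx.2).2
  · linarith [hosc a' a fun j => (h j).symm]

theorem IsPlan.exists_measure {ι κ : Type*} [Fintype ι] [Fintype κ] [MeasurableSpace ι]
    [MeasurableSingletonClass ι] [MeasurableSpace κ] [MeasurableSingletonClass κ]
    {m : Measure ι} {n : Measure κ} [IsProbabilityMeasure m] [IsProbabilityMeasure n]
    {π : ι → κ → ℝ} (hπ : IsPlan (fun a => m.real {a}) (fun b => n.real {b}) π) :
    ∃ η : Measure (ι × κ), IsProbabilityMeasure η ∧ η.map Prod.fst = m ∧ η.map Prod.snd = n ∧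
      ∀ a b, η.real {(a, b)} = π a b := by
  classical
  set η : Measure (ι × κ) :=
    Measure.sum fun z : ι × κ => ENNReal.ofReal (π z.1 z.2) • Measure.dirac z with hη
  have happ : ∀ s : Set (ι × κ), η s =
      ∑ a, ∑ b, if (a, b) ∈ s then ENNReal.ofReal (π a b) else 0 := by
    intro s
    rw [hη, Measure.sum_apply _ (Set.toFinite s).measurableSet, tsum_fintype,
      Fintype.sum_prod_type]
    refine Finset.sum_congr rfl fun a _ => Finset.sum_congr rfl fun b _ => ?_
    simp [Set.indicator_apply]
  have hfst : η.map Prod.fst = m := by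
    refine Measure.ext_of_singleton fun a => ?_
    rw [Measure.map_apply measurable_fst (measurableSet_singleton a), happ,
      Finset.sum_eq_single a (fun a' _ h => by simp [h]) (by simp)]
    simp only [Set.mem_preimage, Set.mem_singleton_iff, if_true]
    rw [← ENNReal.ofReal_sum_of_nonneg fun b _ => hπ.nonneg a b, hπ.row a]
    exact ofReal_measureReal
  have hsnd : η.map Prod.snd = n := by
    refine Measure.ext_of_singleton fun b => ?_
    rw [Measure.map_apply measurable_snd (measurableSet_singleton b), happ, Finset.sum_comm,
      Finset.sum_eq_single b (fun b' _ h => by simp [h]) (by simp)]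
    simp only [Set.mem_preimage, Set.mem_singleton_iff, if_true]
    rw [← ENNReal.ofReal_sum_of_nonneg fun a _ => hπ.nonneg a b, hπ.col b]
    exact ofReal_measureReal
  refine ⟨η, ⟨?_⟩, hfst, hsnd, fun a b => ?_⟩
  · have h := measure_univ (μ := m)
    rwa [← hfst, Measure.map_apply measurable_fst MeasurableSet.univ, Set.preimage_univ] at h
  · rw [Measure.real, happ, Finset.sum_eq_single a (fun a' _ h => by simp [h]) (by simp),
      Finset.sum_eq_single b (fun b' _ h => by simp [h]) (by simp)]
    simp [hπ.nonneg a b]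

theorem isPlan_of_measure {ι κ : Type*} [Fintype ι] [Fintype κ] [MeasurableSpace ι]
    [MeasurableSingletonClass ι] [MeasurableSpace κ] [MeasurableSingletonClass κ]
    (η : Measure (ι × κ)) [IsFiniteMeasure η] :
    IsPlan (fun a => (η.map Prod.fst).real {a}) (fun b => (η.map Prod.snd).real {b})
      (fun a b => η.real {(a, b)}) := by
  classical
  refine ⟨fun a b => measureReal_nonneg, fun a => ?_, fun b => ?_⟩
  · rw [map_measureReal_apply measurable_fst (measurableSet_singleton a)]
    have h := sum_measureReal_singleton (μ := η)
      (Finset.univ.image fun b => (a, b))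
    rw [Finset.sum_image (Prod.mk_right_injective a).injOn] at h
    refine h.trans (congrArg η.real ?_)
    ext ⟨a', b'⟩
    simp [eq_comm]
  · rw [map_measureReal_apply measurable_snd (measurableSet_singleton b)]
    have h := sum_measureReal_singleton (μ := η)
      (Finset.univ.image fun a => (a, b))
    rw [Finset.sum_image (Prod.mk_left_injective b).injOn] at h
    refine h.trans (congrArg η.real ?_)
    ext ⟨a', b'⟩
    simp [eq_comm]

theorem integral_prod_fintype {ι κ : Type*} [Fintype ι] [Fintype κ] [MeasurableSpace ι]
    [MeasurableSingletonClass ι] [MeasurableSpace κ] [MeasurableSingletonClass κ]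
    (η : Measure (ι × κ)) [IsFiniteMeasure η] (c : ι → κ → ℝ) :
    ∫ z, c z.1 z.2 ∂η = ∑ a, ∑ b, c a b * η.real {(a, b)} := by
  rw [integral_fintype Integrable.of_finite, Fintype.sum_prod_type]
  simp only [smul_eq_mul, mul_comm]

theorem W2sq_le_of_mem_couplings {d : ℕ} {P Q : Measure (Euc d)} {γ : Measure (Euc d × Euc d)}
    (hγ : γ ∈ Couplings P Q) : W2sq P Q ≤ ∫ p, ‖p.1 - p.2‖ ^ 2 ∂γ :=
  csInf_le ⟨0, by rintro r ⟨γ, -, rfl⟩; exact integral_nonneg fun _ => by positivity⟩ ⟨γ, hγ, rfl⟩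

/-- The center of the cell of side `1 / L` containing the fine cell of index `a`. -/
def coarseCenter {d : ℕ} (L N : ℕ) (a : Fin d → Fin (L * N)) : Euc d :=
  WithLp.toLp 2 fun i => coarseMid L N (a i)

theorem norm_coarseCenter_sub_sq {d L N : ℕ} (a b : Fin d → Fin (L * N)) :
    ‖coarseCenter L N a - coarseCenter L N b‖ ^ 2 = coarseCost a b := by
  simp [EuclideanSpace.norm_sq_eq, coarseCenter, coarseCost]

theorem gridSnap_eq_coarseCenter {d L N : ℕ} [NeZero (L * N)] (hN : 0 < N) {x : Euc d}
    (hx : x ∈ unitCube d) :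
    gridSnap d (1 / L) x = coarseCenter L N (cellIdx d (L * N) x) := by
  ext i
  have hN' : (N : ℝ) ≠ 0 := by positivity
  have h1 : (cellIdx d (L * N) x i : ℕ) / N = ⌊x i * L⌋₊ := by
    rw [cellIdx_val hx, ← Nat.floor_div_natCast]
    congr 1
    push_cast
    field_simp
  have h2 : ((⌊x i / (1 / (L : ℝ))⌋ : ℤ) : ℝ) = (⌊x i * L⌋₊ : ℝ) := by
    rw [div_div_eq_mul_div, div_one]
    exact (natCast_floor_eq_intCast_floor (mul_nonneg (hx i).1.le (Nat.cast_nonneg L))).symm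
  simp only [gridSnap, coarseCenter, coarseMid, h1]
  change 1 / (L : ℝ) * (⌊x i / (1 / (L : ℝ))⌋ : ℤ) + 1 / L / 2 = _
  rw [h2]
  ring

theorem W2sq_map_gridSnap_le {d L N : ℕ} [NeZero (L * N)] (hN : 0 < N) {P Q : Measure (Euc d)}
    [IsProbabilityMeasure P] [IsProbabilityMeasure Q] (hP : ∀ᵐ x ∂P, x ∈ unitCube d)
    (hQ : ∀ᵐ x ∂Q, x ∈ unitCube d)
    {π : (Fin d → Fin (L * N)) → (Fin d → Fin (L * N)) → ℝ}
    (hπ : IsPlan (fun a => (P.map (cellIdx d (L * N))).real {a})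
      (fun a => (Q.map (cellIdx d (L * N))).real {a}) π) :
    W2sq (P.map (gridSnap d (1 / L))) (Q.map (gridSnap d (1 / L))) ≤
      ∑ a, ∑ b, coarseCost a b * π a b := by
  have hm := measurable_cellIdx d (L * N)
  have := Measure.isProbabilityMeasure_map (μ := P) hm.aemeasurable
  have := Measure.isProbabilityMeasure_map (μ := Q) hm.aemeasurable
  obtain ⟨η, hη, hfst, hsnd, hηπ⟩ := hπ.exists_measure
  have hX : Measurable (coarseCenter (d := d) L N) := Measurable.of_discrete
  have hXX : Measurable (Prod.map (coarseCenter (d := d) L N) (coarseCenter (d := d) L N)) :=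
    hX.prodMap hX
  have hsnap : ∀ R : Measure (Euc d), (∀ᵐ x ∂ R, x ∈ unitCube d) →
      R.map (gridSnap d (1 / L)) = (R.map (cellIdx d (L * N))).map (coarseCenter L N) := by
    intro R hR
    rw [Measure.map_map hX hm]
    exact Measure.map_congr (hR.mono fun x hx => gridSnap_eq_coarseCenter hN hx)
  have hmem : η.map (Prod.map (coarseCenter L N) (coarseCenter L N)) ∈
      Couplings (P.map (gridSnap d (1 / L))) (Q.map (gridSnap d (1 / L))) := by
    refine ⟨Measure.isProbabilityMeasure_map hXX.aemeasurable, ?_, ?_⟩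
    · rw [Measure.map_map measurable_fst hXX, Prod.map_fst', hsnap P hP, ← hfst,
        Measure.map_map hX measurable_fst]
    · rw [Measure.map_map measurable_snd hXX, Prod.map_snd', hsnap Q hQ, ← hsnd,
        Measure.map_map hX measurable_snd]
  refine (W2sq_le_of_mem_couplings hmem).trans (le_of_eq ?_)
  rw [integral_map hXX.aemeasurable (by fun_prop)]
  simp only [Prod.map_fst, Prod.map_snd, norm_coarseCenter_sub_sq]
  rw [integral_prod_fintype]
  simp only [hηπ]

theorem fineCost_cellIdx_le {d M : ℕ} [NeZero M] {x y : Euc d} (hx : x ∈ unitCube d)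
    (hy : y ∈ unitCube d) :
    fineCost (cellIdx d M x) (cellIdx d M y) ≤ ‖x - y‖ ^ 2 + 2 * d / M := by
  have hM : (0 : ℝ) < M := by exact_mod_cast NeZero.pos M
  have hclose : ∀ z ∈ unitCube d, ∀ i, |gridMid (cellIdx d M z i) - z i| ≤ 1 / (2 * M) := by
    intro z hz i
    obtain ⟨-, h1, h2⟩ := (mem_cell_iff (cellIdx d M z) z).1 ⟨rfl, hz⟩ i
    have e : 1 / (2 * (M : ℝ)) = 1 / 2 / M := by field_simp
    rw [gridMid, abs_le, e]
    rw [add_div] at h2 ⊢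
    have e2 : 1 / (M : ℝ) = 1 / 2 / M + 1 / 2 / M := by field_simp; norm_num
    constructor <;> linarith
  have hnorm : ‖x - y‖ ^ 2 = ∑ i, (x i - y i) ^ 2 := by simp [EuclideanSpace.norm_sq_eq]
  have hconst : 2 * (d : ℝ) / M = ∑ _i : Fin d, 2 * (1 / (M : ℝ)) := by
    rw [Finset.sum_const, Finset.card_univ, Fintype.card_fin, nsmul_eq_mul]; ring
  rw [hnorm, hconst, ← Finset.sum_add_distrib]
  refine Finset.sum_le_sum fun i _ => ?_
  set s := gridMid (cellIdx d M x i)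
  set t := gridMid (cellIdx d M y i)
  have h1 : |(s - t) - (x i - y i)| ≤ 1 / M := by
    have e : 1 / (M : ℝ) = 1 / (2 * M) + 1 / (2 * M) := by field_simp; norm_num
    have hs := abs_le.1 (hclose x hx i)
    have ht := abs_le.1 (hclose y hy i)
    rw [abs_le, e]
    constructor <;> linarith [hs.1, hs.2, ht.1, ht.2]
  have h2 : |(s - t) + (x i - y i)| ≤ 2 := by
    have s0 : 0 ≤ s := gridMid_nonneg _
    have s1 : s ≤ 1 := gridMid_le_one _
    have t0 : 0 ≤ t := gridMid_nonneg _
    have t1 : t ≤ 1 := gridMid_le_one _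
    rw [abs_le]
    constructor <;> linarith [(hx i).1, (hx i).2, (hy i).1, (hy i).2]
  have h3 : (s - t) ^ 2 - (x i - y i) ^ 2 ≤ 1 / M * 2 := by
    refine le_trans (le_abs_self _) ?_
    rw [sq_sub_sq, mul_comm, abs_mul]
    exact mul_le_mul h1 h2 (abs_nonneg _) (by positivity)
  linarith

theorem exists_isPlan_sum_fineCost_le {d M : ℕ} [NeZero M] {P Q : Measure (Euc d)}
    (hP : ∀ᵐ x ∂P, x ∈ unitCube d) (hQ : ∀ᵐ x ∂Q, x ∈ unitCube d)
    {γ : Measure (Euc d × Euc d)} (hγ : γ ∈ Couplings P Q) :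
    ∃ π, IsPlan (fun a => (P.map (cellIdx d M)).real {a})
        (fun a => (Q.map (cellIdx d M)).real {a}) π ∧
      ∑ a, ∑ b, fineCost a b * π a b ≤ ∫ z, ‖z.1 - z.2‖ ^ 2 ∂γ + 2 * d / M := by
  obtain ⟨hprob, rfl, rfl⟩ := hγ
  have hm := measurable_cellIdx d M
  have hmm : Measurable (Prod.map (cellIdx d M) (cellIdx d M)) := hm.prodMap hm
  have hplan := isPlan_of_measure (γ.map (Prod.map (cellIdx d M) (cellIdx d M)))
  rw [Measure.map_map measurable_fst hmm, Measure.map_map measurable_snd hmm, Prod.map_fst',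
    Prod.map_snd', ← Measure.map_map hm measurable_fst,
    ← Measure.map_map hm measurable_snd] at hplan
  refine ⟨_, hplan, ?_⟩
  rw [← integral_prod_fintype, integral_map hmm.aemeasurable (by fun_prop)]
  have hcube : ∀ᵐ z ∂γ, z.1 ∈ unitCube d ∧ z.2 ∈ unitCube d :=
    (ae_of_ae_map measurable_fst.aemeasurable hP).and
      (ae_of_ae_map measurable_snd.aemeasurable hQ)
  have hint : Integrable (fun z : Euc d × Euc d => ‖z.1 - z.2‖ ^ 2) γ := by
    refine Integrable.of_bound (by fun_prop) ((√d * 1) ^ 2) (hcube.mono fun z hz => ?_)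
    rw [Real.norm_of_nonneg (by positivity)]
    refine pow_le_pow_left₀ (norm_nonneg _)
      (norm_sub_le_of_forall_abs_sub_le zero_le_one fun i => abs_le.2 ?_) 2
    constructor <;> linarith [(hz.1 i).1, (hz.1 i).2, (hz.2 i).1, (hz.2 i).2]
  have hconst : ∫ z, ‖z.1 - z.2‖ ^ 2 ∂γ + 2 * d / M =
      ∫ z, (‖z.1 - z.2‖ ^ 2 + 2 * d / M) ∂γ := by
    rw [integral_add hint (integrable_const _), integral_const, probReal_univ, one_smul]
  rw [hconst]
  refine integral_mono_ae ?_ (hint.add (integrable_const _))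
    (hcube.mono fun z hz => fineCost_cellIdx_le hz.1 hz.2)
  exact (Integrable.of_finite (f := fun w : (Fin d → Fin M) × (Fin d → Fin M) => fineCost w.1 w.2)
    (μ := γ.map (Prod.map (cellIdx d M) (cellIdx d M)))).comp_measurable hmm

theorem ae_mem_unitCube {d : ℕ} {P : Measure (Euc d)} {f : Euc d → ℝ≥0∞}
    (hP : P = (volume.restrict (unitCube d)).withDensity f) : ∀ᵐ x ∂P, x ∈ unitCube d := by
  rw [hP]
  exact (withDensity_absolutelyContinuous _ _).ae_le (ae_restrict_mem (measurableSet_unitCube d))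

theorem couplings_nonempty {d : ℕ} (P Q : Measure (Euc d)) [IsProbabilityMeasure P]
    [IsProbabilityMeasure Q] : (Couplings P Q).Nonempty :=
  ⟨P.prod Q, inferInstance, by simp, by simp⟩

theorem IsControlled.W2sq_map_gridSnap_le {d L : ℕ} (hL : 0 < L) {α C : ℝ} (hα : 0 ≤ α)
    (hC : 0 < C) {P Q : Measure (Euc d)} [IsProbabilityMeasure P] [IsProbabilityMeasure Q]
    (hPQ : IsControlled d α C P Q) :
    W2sq (P.map (gridSnap d (1 / L))) (Q.map (gridSnap d (1 / L))) ≤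
      W2sq P Q + d * (4 / L * (C * (√d * (1 / L)) ^ α + C / L) + (1 / L) ^ 2) := by
  obtain ⟨μ, ν, hP, hQ, ⟨Cμ, Cν, hCμ, hCν, hsum, hμ, hν⟩, hμb, hνb⟩ := hPQ
  have hPc := ae_mem_unitCube hP
  have hQc := ae_mem_unitCube hQ
  rw [← sub_le_iff_le_add]
  obtain ⟨γ₀, hγ₀⟩ := couplings_nonempty P Q
  refine le_csInf ⟨_, γ₀, hγ₀, rfl⟩ ?_
  rintro r ⟨γ, hγ, rfl⟩
  rw [sub_le_iff_le_add]
  set B : ℝ := d * (4 / L * (C * (√d * (1 / L)) ^ α + C / L) + (1 / L) ^ 2)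
  have hN : ∀ N : ℕ, W2sq (P.map (gridSnap d (1 / L))) (Q.map (gridSnap d (1 / L))) ≤
      ∫ z, ‖z.1 - z.2‖ ^ 2 ∂γ + B + 2 * d / L * (1 / ((N : ℝ) + 1)) := by
    intro n
    obtain ⟨N, hNn, hN0⟩ : ∃ N : ℕ, N = n + 1 ∧ 0 < N := ⟨n + 1, rfl, n.succ_pos⟩
    have : NeZero (L * N) := ⟨(Nat.mul_pos hL hN0).ne'⟩
    have hm := measurable_cellIdx d (L * N)
    have hmapP := Measure.isProbabilityMeasure_map (μ := P) hm.aemeasurable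
    have hmapQ := Measure.isProbabilityMeasure_map (μ := Q) hm.aemeasurable
    have hwP : IsGridWeight L N C (C * (√d * (1 / L)) ^ α)
        (fun a => (P.map (cellIdx d (L * N))).real {a}) := by
      simp only [map_measureReal_apply hm (measurableSet_singleton _)]
      exact isGridWeight_of_holder hL hN0 hα hC hP (fun x hx y hy => (hμ x hx y hy).trans
        (mul_le_mul_of_nonneg_right (by linarith) (by positivity))) hμb
    have hwQ : IsGridWeight L N C (C * (√d * (1 / L)) ^ α)
        (fun a => (Q.map (cellIdx d (L * N))).real {a}) := by
      simp only [map_measureReal_apply hm (measurableSet_singleton _)]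
      exact isGridWeight_of_holder hL hN0 hα hC hQ (fun x hx y hy => (hν x hx y hy).trans
        (mul_le_mul_of_nonneg_right (by linarith) (by positivity))) hνb
    have hsum1 : ∀ R : Measure (Fin d → Fin (L * N)), IsProbabilityMeasure R →
        ∑ a, R.real {a} = 1 := by
      intro R hR
      rw [sum_measureReal_singleton, Finset.coe_univ, probReal_univ]
    obtain ⟨π, hπ, hmin⟩ := IsPlan.exists_minimizer (fun a => (hwP.pos a).le)
      (fun a => (hwQ.pos a).le) (hsum1 _ hmapP) (hsum1 _ hmapQ) fineCost
    obtain ⟨π', hπ', hcost⟩ := exists_isPlan_sum_fineCost_le (M := L * N) hPc hQc hγ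
    have h1 := _root_.W2sq_map_gridSnap_le hN0 hPc hQc hπ
    have h2 := hπ.sum_coarseCost_le hL hN0 hwP hwQ (hsum1 _ hmapP) hmin
    have h3 := hmin π' hπ'
    have h4 : 2 * (d : ℝ) / (L * N : ℕ) = 2 * d / L * (1 / ((n : ℝ) + 1)) := by
      rw [hNn]; push_cast; rw [div_mul_div_comm, mul_one]
    linarith
  have hlim := (tendsto_one_div_add_atTop_nhds_zero_nat (𝕜 := ℝ)).const_mul (2 * (d : ℝ) / L)
  have hlim' := hlim.const_add (∫ z, ‖z.1 - z.2‖ ^ 2 ∂γ + B)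
  rw [mul_zero, add_zero] at hlim'
  exact ge_of_tendsto' hlim' hN

/-- Discretization error upper bound:
`W₂²(G_h#P, G_h#Q) ≤ W₂²(P,Q) + K h^{1+α}`. -/
theorem grid_discretization_upper (d : ℕ) (hd : 1 ≤ d) (α C : ℝ)
    (hα0 : 0 < α) (hα1 : α < 1) (hC : 1 < C) :
    ∃ K > (0 : ℝ), ∀ P Q : Measure (Euc d),
      IsProbabilityMeasure P → IsProbabilityMeasure Q →
      IsControlled d α C P Q →
      ∀ h : ℝ, 0 < h → (∃ L : ℕ, 0 < L ∧ h = 1 / L) →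
        W2sq (P.map (gridSnap d h)) (Q.map (gridSnap d h))
          ≤ W2sq P Q + K * h ^ (1 + α) := by
  have hC0 : 0 < C := by linarith
  have hd0 : (0 : ℝ) < d := by exact_mod_cast hd
  refine ⟨d * (4 * (C * √d ^ α + C) + 1), by positivity, ?_⟩
  rintro P Q hP hQ hPQ h hh ⟨L, hL, rfl⟩
  refine (hPQ.W2sq_map_gridSnap_le hL hα0.le hC0).trans (add_le_add_right ?_ _)
  have hh1 : 1 / (L : ℝ) ≤ 1 := by
    rw [div_le_one (by exact_mod_cast hL)]
    exact_mod_cast hL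
  rw [div_eq_mul_one_div 4 (L : ℝ), div_eq_mul_one_div C (L : ℝ)]
  generalize 1 / (L : ℝ) = t at hh hh1 ⊢
  have ht : t ≤ t ^ α := by
    simpa using Real.rpow_le_rpow_of_exponent_ge hh hh1 hα1.le
  rw [Real.rpow_add hh, Real.rpow_one, Real.mul_rpow (Real.sqrt_nonneg _) hh.le, mul_assoc 4,
    mul_assoc (d : ℝ)]
  refine mul_le_mul_of_nonneg_left ?_ hd0.le
  have h1 : t * t ≤ t * t ^ α := mul_le_mul_of_nonneg_left ht hh.le
  nlinarith [mul_le_mul_of_nonneg_left h1 hC0.le]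
end
end

section
/- Let d ≥ 1 be an integer and let P and Q be (α,C)-controlled probability measures on (0,1)^d for some C > 1 and 0 < α < 1. Then there exists a constant K > 0, depending only on d, C and α, such that for every h > 0 with 1/h a positive integer, W₂²(P, Q) ≤ W₂²(G_h # P, G_h # Q) + K·h^{1+α}. -/
open MeasureTheory
open scoped ENNReal RealInnerProductSpace

noncomputable section

/-- A measure is the sum of its traces on a finite measurable partition up to null sets. -/
lemma measure_eq_sum_inter {X ι : Type*} [MeasurableSpace X] [Fintype ι] (m : Measure X)
    {A : ι → Set X} (hA : ∀ i, MeasurableSet (A i)) (hd : Pairwise (Function.onFun Disjoint A))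
    (hcover : ∀ᵐ x ∂m, ∃ i, x ∈ A i) {s : Set X} (hs : MeasurableSet s) :
    m s = ∑ i, m (A i ∩ s) := by
  rw [← measure_biUnion_finset (fun i _ j _ hij => (hd hij).mono Set.inter_subset_left
    Set.inter_subset_left) (fun i _ => (hA i).inter hs)]
  refine measure_congr ?_
  filter_upwards [hcover] with x ⟨i, hi⟩
  refine propext ⟨fun hx => Set.mem_iUnion₂.2 ⟨i, Finset.mem_univ i, hi, hx⟩, fun hx => ?_⟩
  obtain ⟨j, _, _, hx⟩ := Set.mem_iUnion₂.1 hx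
  exact hx

/-- A measure concentrated on finitely many points is a sum of point masses. -/
lemma eq_sum_smul_dirac {X ι : Type*} [MeasurableSpace X] [MeasurableSingletonClass X] [Fintype ι]
    (m : Measure X) {c : ι → X} (hc : Function.Injective c) (hcover : ∀ᵐ x ∂m, ∃ i, x = c i) :
    m = ∑ i, m {c i} • Measure.dirac (c i) := by
  ext s hs
  rw [measure_eq_sum_inter m (A := fun i => {c i}) (fun i => measurableSet_singleton _)
    (fun i j hij => by simpa [Function.onFun] using hc.ne hij) hcover hs, Measure.finsetSum_apply]
  refine Finset.sum_congr rfl fun i _ => ?_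
  rw [Measure.smul_apply, Measure.dirac_apply' _ hs, smul_eq_mul]
  by_cases h : c i ∈ s
  · simp [h]
  · simp [h]

/-- Conditioning a probability measure on the cells of a partition and averaging with the masses
of the cells gives the measure back. -/
lemma sum_mul_cond {X ι : Type*} [MeasurableSpace X] [Fintype ι] (P : Measure X)
    [IsFiniteMeasure P] {B : ι → Set X} (hB : ∀ i, MeasurableSet (B i))
    (hd : Pairwise (Function.onFun Disjoint B)) (hcover : ∀ᵐ x ∂P, ∃ i, x ∈ B i) {s : Set X}
    (hs : MeasurableSet s) : ∑ i, P (B i) * ProbabilityTheory.cond P (B i) s = P s := by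
  rw [measure_eq_sum_inter P hB hd hcover hs]
  refine Finset.sum_congr rfl fun i _ => ?_
  rw [mul_comm, ProbabilityTheory.cond_mul_eq_inter (hB i)]

/-- The mass of the image of a partitioned measure at the label of a cell. -/
lemma map_singleton_eq {X ι : Type*} [MeasurableSpace X] [MeasurableSingletonClass X]
    {P : Measure X} {G : X → X} (hG : Measurable G) {c : ι → X} (hc : Function.Injective c)
    {B : ι → Set X} (hBc : ∀ i, ∀ x ∈ B i, G x = c i) (hcover : ∀ᵐ x ∂P, ∃ i, x ∈ B i) (i : ι) :
    P.map G {c i} = P (B i) := by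
  rw [Measure.map_apply hG (measurableSet_singleton _)]
  refine measure_congr ?_
  filter_upwards [hcover] with x ⟨j, hj⟩
  refine propext ⟨fun hx => ?_, fun hx => hBc i x hx⟩
  have hx' : G x = c i := hx
  rw [hBc j x hj] at hx'
  rw [← hc hx']
  exact hj

/-- A coupling of the images of `P` and `Q` under a map that is constant on the cells of a finite
partition lifts to a coupling of `P` and `Q`, by taking products of conditioned measures. -/
lemma exists_lift_coupling {d : ℕ} {ι : Type*} [Fintype ι] {P Q : Measure (Euc d)}
    [IsProbabilityMeasure P] [IsProbabilityMeasure Q] {G : Euc d → Euc d} (hG : Measurable G)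
    {c : ι → Euc d} (hc : Function.Injective c) {B : ι → Set (Euc d)}
    (hB : ∀ i, MeasurableSet (B i)) (hBc : ∀ i, ∀ x ∈ B i, G x = c i)
    (hP0 : ∀ i, P (B i) ≠ 0) (hQ0 : ∀ i, Q (B i) ≠ 0)
    (hP : ∀ᵐ x ∂P, ∃ i, x ∈ B i) (hQ : ∀ᵐ x ∂Q, ∃ i, x ∈ B i) {D : ℝ}
    (hint : ∀ i j, Integrable (fun p : Euc d × Euc d => ‖p.1 - p.2‖ ^ 2)
      ((ProbabilityTheory.cond P (B i)).prod (ProbabilityTheory.cond Q (B j))))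
    (hD : ∀ i j, ∫ p, ‖p.1 - p.2‖ ^ 2
      ∂((ProbabilityTheory.cond P (B i)).prod (ProbabilityTheory.cond Q (B j)))
        ≤ ‖c i - c j‖ ^ 2 + D)
    {π : Measure (Euc d × Euc d)} (hπ : π ∈ Couplings (P.map G) (Q.map G)) :
    ∃ γ ∈ Couplings P Q, ∫ p, ‖p.1 - p.2‖ ^ 2 ∂γ ≤ (∫ p, ‖p.1 - p.2‖ ^ 2 ∂π) + D := by
  obtain ⟨hπp, hπ1, hπ2⟩ := hπ
  have hd : Pairwise (Function.onFun Disjoint B) := fun i j hij =>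
    Set.disjoint_left.2 fun x hx hy => hij (hc ((hBc i x hx).symm.trans (hBc j x hy)))
  have hPp : ∀ i, IsProbabilityMeasure (ProbabilityTheory.cond P (B i)) := fun i =>
    ProbabilityTheory.cond_isProbabilityMeasure (hP0 i)
  have hQp : ∀ i, IsProbabilityMeasure (ProbabilityTheory.cond Q (B i)) := fun i =>
    ProbabilityTheory.cond_isProbabilityMeasure (hQ0 i)
  have hc1 : ∀ᵐ z ∂π, ∃ i, z ∈ Prod.fst ⁻¹' {c i} := by
    have : ∀ᵐ x ∂(π.map Prod.fst), ∃ i, x ∈ ({c i} : Set (Euc d)) := by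
      have hm : MeasurableSet {x | ∃ i, x ∈ ({c i} : Set (Euc d))} :=
        MeasurableSet.congr (Set.finite_range c).measurableSet (by ext; simp [eq_comm])
      rw [hπ1, ae_map_iff hG.aemeasurable hm]
      filter_upwards [hP] with x ⟨i, hi⟩ using ⟨i, hBc i x hi⟩
    exact ae_of_ae_map measurable_fst.aemeasurable this
  have hc2 : ∀ᵐ z ∂π, ∃ i, z ∈ Prod.snd ⁻¹' {c i} := by
    have : ∀ᵐ x ∂(π.map Prod.snd), ∃ i, x ∈ ({c i} : Set (Euc d)) := by
      have hm : MeasurableSet {x | ∃ i, x ∈ ({c i} : Set (Euc d))} :=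
        MeasurableSet.congr (Set.finite_range c).measurableSet (by ext; simp [eq_comm])
      rw [hπ2, ae_map_iff hG.aemeasurable hm]
      filter_upwards [hQ] with x ⟨i, hi⟩ using ⟨i, hBc i x hi⟩
    exact ae_of_ae_map measurable_snd.aemeasurable this
  have hdis : ∀ f : Euc d × Euc d → Euc d,
      Pairwise (Function.onFun Disjoint fun i => f ⁻¹' {c i}) := fun f i j hij =>
    Disjoint.preimage f (by simpa using hc.ne hij)
  have hs1 : ∀ i, ∑ j, π {(c i, c j)} = P (B i) := fun i => by
    rw [← map_singleton_eq hG hc hBc hP, ← hπ1,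
      Measure.map_apply measurable_fst (measurableSet_singleton _),
      measure_eq_sum_inter π (fun i => measurable_snd (measurableSet_singleton (c i)))
        (hdis Prod.snd) hc2 (measurable_fst (measurableSet_singleton (c i)))]
    refine Finset.sum_congr rfl fun j _ => congrArg π ?_
    ext ⟨x, y⟩
    simp [and_comm]
  have hs2 : ∀ j, ∑ i, π {(c i, c j)} = Q (B j) := fun j => by
    rw [← map_singleton_eq hG hc hBc hQ, ← hπ2,
      Measure.map_apply measurable_snd (measurableSet_singleton _),
      measure_eq_sum_inter π (fun i => measurable_fst (measurableSet_singleton (c i)))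
        (hdis Prod.fst) hc1 (measurable_snd (measurableSet_singleton (c j)))]
    refine Finset.sum_congr rfl fun i _ => congrArg π ?_
    ext ⟨x, y⟩
    simp
  have hπsum : π = ∑ k : ι × ι, π {(c k.1, c k.2)} • Measure.dirac (c k.1, c k.2) := by
    refine eq_sum_smul_dirac π (c := fun k : ι × ι => (c k.1, c k.2)) ?_ ?_
    · exact fun k l hkl => Prod.ext (hc (congrArg Prod.fst hkl)) (hc (congrArg Prod.snd hkl))
    · filter_upwards [hc1, hc2] with z ⟨i, hi⟩ ⟨j, hj⟩ using ⟨(i, j), Prod.ext hi hj⟩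
  set γ : Measure (Euc d × Euc d) := ∑ k : ι × ι, π {(c k.1, c k.2)} •
    (ProbabilityTheory.cond P (B k.1)).prod (ProbabilityTheory.cond Q (B k.2)) with hγ
  have hγ1 : γ.map Prod.fst = P := by
    ext s hs
    rw [Measure.map_apply measurable_fst hs, hγ, Measure.finsetSum_apply,
      ← sum_mul_cond P hB hd hP hs, Fintype.sum_prod_type]
    refine Finset.sum_congr rfl fun i _ => ?_
    rw [← hs1, Finset.sum_mul]
    refine Finset.sum_congr rfl fun j _ => ?_
    rw [Measure.smul_apply, smul_eq_mul, ← Set.prod_univ, Measure.prod_prod, measure_univ, mul_one]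
  have hγ2 : γ.map Prod.snd = Q := by
    ext s hs
    rw [Measure.map_apply measurable_snd hs, hγ, Measure.finsetSum_apply,
      ← sum_mul_cond Q hB hd hQ hs, Fintype.sum_prod_type_right]
    refine Finset.sum_congr rfl fun j _ => ?_
    rw [← hs2, Finset.sum_mul]
    refine Finset.sum_congr rfl fun i _ => ?_
    rw [Measure.smul_apply, smul_eq_mul, ← Set.univ_prod, Measure.prod_prod, measure_univ, one_mul]
  have hγp : IsProbabilityMeasure γ := by
    refine ⟨?_⟩
    have : γ.map Prod.fst Set.univ = 1 := by rw [hγ1, measure_univ]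
    rwa [Measure.map_apply measurable_fst MeasurableSet.univ, Set.preimage_univ] at this
  refine ⟨γ, ⟨hγp, hγ1, hγ2⟩, ?_⟩
  have hone : ∑ k : ι × ι, (π {(c k.1, c k.2)}).toReal = 1 := by
    rw [← ENNReal.toReal_sum fun k _ => measure_ne_top _ _, Fintype.sum_prod_type]
    simp_rw [hs1]
    have := sum_mul_cond P hB hd hP MeasurableSet.univ
    simp only [measure_univ, mul_one] at this
    rw [this, ENNReal.toReal_one]
  have hπint : ∫ p, ‖p.1 - p.2‖ ^ 2 ∂π =
      ∑ k : ι × ι, (π {(c k.1, c k.2)}).toReal * ‖c k.1 - c k.2‖ ^ 2 := by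
    conv_lhs => rw [hπsum]
    rw [integral_finsetSum_measure fun k _ =>
      (integrable_dirac (by simp)).smul_measure (measure_ne_top _ _)]
    refine Finset.sum_congr rfl fun k _ => ?_
    rw [integral_smul_measure, integral_dirac, smul_eq_mul]
  rw [hπint, hγ, integral_finsetSum_measure fun k _ =>
      (hint k.1 k.2).smul_measure (measure_ne_top _ _)]
  calc _ ≤ ∑ k : ι × ι, (π {(c k.1, c k.2)}).toReal * (‖c k.1 - c k.2‖ ^ 2 + D) := by
        refine Finset.sum_le_sum fun k _ => ?_
        rw [integral_smul_measure, smul_eq_mul]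
        exact mul_le_mul_of_nonneg_left (hD k.1 k.2) ENNReal.toReal_nonneg
    _ = _ := by simp_rw [mul_add, Finset.sum_add_distrib, ← Finset.sum_mul, hone, one_mul]

lemma norm_le_sqrt_mul_of_abs_le {d : ℕ} {x : Euc d} {r : ℝ} (hr : 0 ≤ r)
    (hx : ∀ i, |x i| ≤ r) : ‖x‖ ≤ √d * r := by
  rw [EuclideanSpace.norm_eq, ← Real.sqrt_sq hr, ← Real.sqrt_mul (Nat.cast_nonneg d)]
  refine Real.sqrt_le_sqrt ?_
  calc ∑ i, ‖x i‖ ^ 2 ≤ ∑ _i : Fin d, r ^ 2 :=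
        Finset.sum_le_sum fun i _ => pow_le_pow_left₀ (norm_nonneg _) (hx i) 2
    _ = d * r ^ 2 := by simp

/-- The mean squared distance of two independent points located near `a` and `b` exceeds
`‖a - b‖ ^ 2` only by a term controlled by the biases and the radii. -/
lemma integral_prod_norm_sub_sq_le {E : Type*} [NormedAddCommGroup E] [InnerProductSpace ℝ E]
    [CompleteSpace E] [MeasurableSpace E] [BorelSpace E] [SecondCountableTopology E]
    {p q : Measure E} [IsProbabilityMeasure p] [IsProbabilityMeasure q] {a b : E} {r R δ : ℝ}
    (hp : ∀ᵐ x ∂p, ‖x - a‖ ≤ r) (hq : ∀ᵐ x ∂q, ‖x - b‖ ≤ r)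
    (hpm : ‖∫ x, (x - a) ∂p‖ ≤ δ) (hqm : ‖∫ x, (x - b) ∂q‖ ≤ δ) (hab : ‖a - b‖ ≤ R) :
    Integrable (fun z : E × E => ‖z.1 - z.2‖ ^ 2) (p.prod q) ∧
    ∫ z, ‖z.1 - z.2‖ ^ 2 ∂(p.prod q) ≤ ‖a - b‖ ^ 2 + (4 * R * δ + 4 * r ^ 2) := by
  have hp' : ∀ᵐ z ∂(p.prod q), ‖z.1 - a‖ ≤ r := Measure.quasiMeasurePreserving_fst.ae hp
  have hq' : ∀ᵐ z ∂(p.prod q), ‖z.2 - b‖ ≤ r := Measure.quasiMeasurePreserving_snd.ae hq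
  have hR : 0 ≤ R := (norm_nonneg _).trans hab
  have hδ : 0 ≤ δ := (norm_nonneg _).trans hpm
  have hi1 : Integrable (fun x => x - a) p :=
    Integrable.of_bound (by fun_prop) r hp
  have hi2 : Integrable (fun x => x - b) q :=
    Integrable.of_bound (by fun_prop) r hq
  have hI1 : Integrable (fun z : E × E => inner ℝ (a - b) (z.1 - a)) (p.prod q) :=
    (hi1.comp_fst q).const_inner (a - b)
  have hI2 : Integrable (fun z : E × E => inner ℝ (a - b) (z.2 - b)) (p.prod q) :=
    (hi2.comp_snd p).const_inner (a - b)
  have hI3 : Integrable (fun z : E × E => ‖(z.1 - a) - (z.2 - b)‖ ^ 2) (p.prod q) := by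
    refine Integrable.of_bound (by fun_prop) ((r + r) ^ 2) ?_
    filter_upwards [hp', hq'] with z h1 h2
    rw [Real.norm_of_nonneg (by positivity)]
    exact pow_le_pow_left₀ (norm_nonneg _) ((norm_sub_le _ _).trans (add_le_add h1 h2)) 2
  have hexp : ∀ z : E × E, ‖z.1 - z.2‖ ^ 2 = ‖a - b‖ ^ 2 +
      2 * (inner ℝ (a - b) (z.1 - a) - inner ℝ (a - b) (z.2 - b)) +
      ‖(z.1 - a) - (z.2 - b)‖ ^ 2 := fun z => by
    rw [← inner_sub_right, ← norm_add_sq_real]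
    congr 2
    abel
  have hI12 : Integrable (fun z : E × E => 2 * (inner ℝ (a - b) (z.1 - a) -
      inner ℝ (a - b) (z.2 - b))) (p.prod q) := (hI1.sub hI2).const_mul 2
  have hI0 : Integrable (fun z : E × E => ‖a - b‖ ^ 2 + 2 * (inner ℝ (a - b) (z.1 - a) -
      inner ℝ (a - b) (z.2 - b))) (p.prod q) := (integrable_const _).add hI12
  simp_rw [hexp]
  refine ⟨hI0.add hI3, ?_⟩
  rw [integral_add hI0 hI3, integral_add (integrable_const _) hI12, integral_const_mul,
    integral_sub hI1 hI2, integral_fun_fst (fun x => inner ℝ (a - b) (x - a)),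
    integral_fun_snd (fun x => inner ℝ (a - b) (x - b)), integral_inner hi1, integral_inner hi2]
  simp only [integral_const, probReal_univ, one_smul]
  have h1 : inner ℝ (a - b) (∫ x, (x - a) ∂p) ≤ R * δ :=
    (real_inner_le_norm _ _).trans (mul_le_mul hab hpm (norm_nonneg _) hR)
  have h2 : -inner ℝ (a - b) (∫ x, (x - b) ∂q) ≤ R * δ := by
    rw [← inner_neg_right]
    refine (real_inner_le_norm _ _).trans ?_
    rw [norm_neg]
    exact mul_le_mul hab hqm (norm_nonneg _) hR
  have h3 : ∫ z, ‖(z.1 - a) - (z.2 - b)‖ ^ 2 ∂(p.prod q) ≤ (r + r) ^ 2 := by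
    calc _ ≤ ∫ _z, (r + r) ^ 2 ∂(p.prod q) := by
          refine integral_mono_ae hI3 (integrable_const _) ?_
          filter_upwards [hp', hq'] with z h1 h2
          exact pow_le_pow_left₀ (norm_nonneg _) ((norm_sub_le _ _).trans (add_le_add h1 h2)) 2
      _ = _ := by simp
  nlinarith

/-- The open cube with center `c` and side length `h`. -/
def openCell {d : ℕ} (c : Euc d) (h : ℝ) : Set (Euc d) := {x | ∀ i, |x i - c i| < h / 2}

lemma isOpen_openCell {d : ℕ} (c : Euc d) (h : ℝ) : IsOpen (openCell c h) := by
  simp only [openCell, Set.ofPred_forall]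
  exact isOpen_iInter_of_finite fun i => isOpen_lt (by fun_prop) continuous_const

lemma isOpen_unitCube (d : ℕ) : IsOpen (unitCube d) := by
  simp only [unitCube, Set.ofPred_forall]
  exact isOpen_iInter_of_finite fun i => isOpen_Ioo.preimage (by fun_prop)

lemma center_mem_openCell {d : ℕ} (c : Euc d) {h : ℝ} (hh : 0 < h) : c ∈ openCell c h :=
  fun i => by simpa using hh

lemma norm_sub_le_of_mem_openCell {d : ℕ} {c x : Euc d} {h : ℝ} (hh : 0 < h)
    (hx : x ∈ openCell c h) : ‖x - c‖ ≤ √d * (h / 2) :=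
  norm_le_sqrt_mul_of_abs_le (by positivity) fun i => (hx i).le

lemma setIntegral_openCell_sub {d : ℕ} (c : Euc d) (h : ℝ) :
    ∫ x in openCell c h, (x - c) = 0 := by
  rw [← integral_indicator (isOpen_openCell c h).measurableSet]
  have key := integral_sub_left_eq_self ((openCell c h).indicator fun x => x - c) volume (c + c)
  have hodd : ∀ x, (openCell c h).indicator (fun x => x - c) (c + c - x) =
      -(openCell c h).indicator (fun x => x - c) x := fun x => by
    have hiff : c + c - x ∈ openCell c h ↔ x ∈ openCell c h := by
      refine forall_congr' fun i => ?_
      rw [← abs_neg]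
      have : -((c + c - x) i - c i) = x i - c i := by
        simp only [PiLp.sub_apply, PiLp.add_apply]
        ring
      rw [this]
    by_cases hx : x ∈ openCell c h
    · rw [Set.indicator_of_mem hx, Set.indicator_of_mem (hiff.2 hx)]
      abel
    · rw [Set.indicator_of_notMem hx, Set.indicator_of_notMem (fun hx' => hx (hiff.1 hx')),
        neg_zero]
  simp_rw [hodd, integral_neg] at key
  have htwo : (2 : ℝ) • ∫ x, (openCell c h).indicator (fun x => x - c) x = 0 := by
    rw [two_smul]
    nth_rw 1 [← key]
    exact neg_add_cancel _
  exact (smul_eq_zero.1 htwo).resolve_left two_ne_zero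

section Density

variable {d : ℕ} {α C : ℝ} {P : Measure (Euc d)} {μ : Euc d → ℝ}

lemma continuousOn_of_holder {X : Type*} [NormedAddCommGroup X] {s : Set X} {f : X → ℝ}
    (hα : 0 < α) (hf : ∀ x ∈ s, ∀ y ∈ s, |f x - f y| ≤ C * ‖x - y‖ ^ α) : ContinuousOn f s := by
  intro x hx
  rw [ContinuousWithinAt, tendsto_iff_norm_sub_tendsto_zero]
  have hlim : Filter.Tendsto (fun y => C * ‖y - x‖ ^ α) (nhdsWithin x s) (nhds 0) := by
    have hcont : Continuous fun y : X => C * ‖y - x‖ ^ α :=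
      continuous_const.mul (Continuous.rpow_const (by fun_prop) fun _ => Or.inr hα.le)
    have := (hcont.tendsto x).mono_left (nhdsWithin_le_nhds (s := s))
    simpa [Real.zero_rpow hα.ne'] using this
  refine squeeze_zero' (Filter.Eventually.of_forall fun _ => norm_nonneg _) ?_ hlim
  filter_upwards [self_mem_nhdsWithin] with y hy using hf y hy x hx

/-- A density bounded below gives an open cell a mass comparable to its volume. -/
lemma volume_openCell_le {c : Euc d} {h : ℝ}
    (hP : P = (volume.restrict (unitCube d)).withDensity (fun x => ENNReal.ofReal (μ x)))
    (hlow : ∀ x ∈ unitCube d, C⁻¹ ≤ μ x) (hsub : openCell c h ⊆ unitCube d) :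
    ENNReal.ofReal C⁻¹ * volume (openCell c h) ≤ P (openCell c h) := by
  have hm := (isOpen_openCell c h).measurableSet
  rw [hP, withDensity_apply _ hm, Measure.restrict_restrict hm, Set.inter_eq_left.2 hsub,
    ← setLIntegral_const]
  exact setLIntegral_mono' hm fun x hx => ENNReal.ofReal_le_ofReal (hlow x (hsub hx))

lemma openCell_measure_ne_zero {c : Euc d} {h : ℝ} (hh : 0 < h) (hC : 0 < C)
    (hP : P = (volume.restrict (unitCube d)).withDensity (fun x => ENNReal.ofReal (μ x)))
    (hlow : ∀ x ∈ unitCube d, C⁻¹ ≤ μ x) (hsub : openCell c h ⊆ unitCube d) :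
    P (openCell c h) ≠ 0 := fun h0 => by
  have hle := volume_openCell_le hP hlow hsub
  rw [h0, nonpos_iff_eq_zero, mul_eq_zero] at hle
  rcases hle with hle | hle
  · exact (ENNReal.ofReal_pos.2 (inv_pos.2 hC)).ne' hle
  · exact ((isOpen_openCell c h).measure_pos volume ⟨c, center_mem_openCell c hh⟩).ne' hle

/-- The barycenter of a measure with Hölder density conditioned on a cell is close to the center. -/
lemma norm_integral_cond_openCell_le [IsFiniteMeasure P] {c : Euc d} {h : ℝ} (hh : 0 < h)
    (hC : 0 < C) (hα : 0 < α)
    (hP : P = (volume.restrict (unitCube d)).withDensity (fun x => ENNReal.ofReal (μ x)))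
    (hlow : ∀ x ∈ unitCube d, C⁻¹ ≤ μ x)
    (hhol : ∀ x ∈ unitCube d, ∀ y ∈ unitCube d, |μ x - μ y| ≤ C * ‖x - y‖ ^ α)
    (hsub : openCell c h ⊆ unitCube d) :
    ‖∫ x, (x - c) ∂(ProbabilityTheory.cond P (openCell c h))‖
      ≤ C ^ 2 * (√d * (h / 2)) ^ (1 + α) := by
  have hm := (isOpen_openCell c h).measurableSet
  set r := √d * (h / 2) with hr
  have hr0 : 0 ≤ r := by positivity
  have hle := volume_openCell_le hP hlow hsub
  have h0 := openCell_measure_ne_zero hh hC hP hlow hsub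
  have hvol : volume (openCell c h) ≠ ⊤ := fun htop => by
    rw [htop, ENNReal.mul_top (ENNReal.ofReal_pos.2 (inv_pos.2 hC)).ne'] at hle
    exact measure_ne_top P _ (top_le_iff.1 hle)
  have hle' : volume.real (openCell c h) ≤ C * P.real (openCell c h) := by
    have := ENNReal.toReal_mono (measure_ne_top P _) hle
    rw [ENNReal.toReal_mul, ENNReal.toReal_ofReal (inv_pos.2 hC).le] at this
    rwa [← inv_mul_le_iff₀ hC]
  have hcont : ContinuousOn μ (openCell c h) := (continuousOn_of_holder hα hhol).mono hsub
  have hset : ∫ x in openCell c h, (x - c) ∂P = ∫ x in openCell c h, (μ x - μ c) • (x - c) := by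
    rw [hP, setIntegral_withDensity_eq_setIntegral_toReal_smul₀ _ _ _ hm,
      Measure.restrict_restrict hm, Set.inter_eq_left.2 hsub]
    · have hI : IntegrableOn (fun x => μ c • (x - c)) (openCell c h) := by
        refine IntegrableOn.of_bound hvol.lt_top (by fun_prop) (‖μ c‖ * r) ?_
        filter_upwards [ae_restrict_mem hm] with x hx
        rw [norm_smul]
        exact mul_le_mul_of_nonneg_left (norm_sub_le_of_mem_openCell hh hx) (norm_nonneg _)
      have hI' : IntegrableOn (fun x => (μ x - μ c) • (x - c)) (openCell c h) := by
        refine IntegrableOn.of_bound hvol.lt_top ?_ (C * r ^ α * r) ?_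
        · exact ContinuousOn.aestronglyMeasurable
            ((hcont.sub continuousOn_const).smul (by fun_prop)) hm
        · filter_upwards [ae_restrict_mem hm] with x hx
          rw [norm_smul]
          have hxr := norm_sub_le_of_mem_openCell hh hx
          refine mul_le_mul ((hhol x (hsub hx) c (hsub (center_mem_openCell c hh))).trans ?_)
            hxr (norm_nonneg _) (by positivity)
          gcongr
      calc _ = ∫ x in openCell c h, ((μ x - μ c) • (x - c) + μ c • (x - c)) := by
            refine setIntegral_congr_fun hm fun x hx => ?_
            have hpos : 0 ≤ μ x := (inv_pos.2 hC).le.trans (hlow x (hsub hx))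
            simp only [ENNReal.toReal_ofReal hpos]
            rw [← add_smul, sub_add_cancel]
        _ = _ := by
            rw [integral_add hI' hI, integral_smul, setIntegral_openCell_sub, smul_zero, add_zero]
    · rw [Measure.restrict_restrict hm, Set.inter_eq_left.2 hsub]
      exact (hcont.aemeasurable hm).ennreal_ofReal
    · exact Filter.Eventually.of_forall fun x => ENNReal.ofReal_lt_top
  have hbound : ‖∫ x in openCell c h, (x - c) ∂P‖ ≤ C * r ^ α * r * volume.real (openCell c h) := by
    rw [hset]
    refine norm_setIntegral_le_of_norm_le_const hvol.lt_top fun x hx => ?_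
    rw [norm_smul]
    have hxr := norm_sub_le_of_mem_openCell hh hx
    refine mul_le_mul ((hhol x (hsub hx) c (hsub (center_mem_openCell c hh))).trans ?_)
      hxr (norm_nonneg _) (by positivity)
    gcongr
  have hPpos : 0 < P.real (openCell c h) := ENNReal.toReal_pos h0 (measure_ne_top _ _)
  rw [ProbabilityTheory.cond, integral_smul_measure, norm_smul, ENNReal.toReal_inv, norm_inv,
    Real.norm_of_nonneg ENNReal.toReal_nonneg, ← measureReal_def, inv_mul_le_iff₀ hPpos]
  calc _ ≤ _ := hbound
    _ ≤ C * r ^ α * r * (C * P.real (openCell c h)) := by gcongr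
    _ = P.real (openCell c h) * (C ^ 2 * r ^ (1 + α)) := by
        rw [Real.rpow_add_of_nonneg hr0 zero_le_one hα.le, Real.rpow_one]
        ring

end Density

/-- The center of the grid cell with multi-index `k`. -/
def gridCenter {d L : ℕ} (h : ℝ) (k : Fin d → Fin L) : Euc d :=
  WithLp.toLp 2 fun i => h * (k i : ℝ) + h / 2

lemma gridCenter_injective {d L : ℕ} {h : ℝ} (hh : 0 < h) :
    Function.Injective (gridCenter (d := d) (L := L) h) := fun k l hkl => by
  ext i
  have hi : h * (k i : ℝ) + h / 2 = h * (l i : ℝ) + h / 2 :=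
    congrArg (fun x : Euc d => x i) hkl
  exact_mod_cast mul_left_cancel₀ hh.ne' (add_right_cancel hi)

lemma openCell_gridCenter_subset {d L : ℕ} {h : ℝ} (hh : 0 < h) (hL : h * L = 1)
    (k : Fin d → Fin L) : openCell (gridCenter h k) h ⊆ unitCube d := fun x hx i => by
  have hi : |x i - (h * (k i : ℝ) + h / 2)| < h / 2 := hx i
  rw [abs_lt] at hi
  have hk : ((k i : ℕ) : ℝ) + 1 ≤ L := by exact_mod_cast (k i).2
  have h0 : 0 ≤ h * ((k i : ℕ) : ℝ) := by positivity
  have h1 : h * (((k i : ℕ) : ℝ) + 1) ≤ h * L := mul_le_mul_of_nonneg_left hk hh.le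
  exact ⟨by linarith, by linarith⟩

lemma gridSnap_of_mem_openCell {d L : ℕ} {h : ℝ} (hh : 0 < h) (k : Fin d → Fin L) {x : Euc d}
    (hx : x ∈ openCell (gridCenter h k) h) : gridSnap d h x = gridCenter h k := by
  ext i
  have hi : |x i - (h * (k i : ℝ) + h / 2)| < h / 2 := hx i
  rw [abs_lt] at hi
  have hfl : ⌊x i / h⌋ = ((k i : ℕ) : ℤ) := by
    rw [Int.floor_eq_iff, le_div_iff₀ hh, div_lt_iff₀ hh]
    push_cast
    exact ⟨by linarith, by linarith⟩
  change h * (⌊x i / h⌋ : ℝ) + h / 2 = h * (k i : ℝ) + h / 2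
  rw [hfl]
  push_cast
  rfl

lemma measurable_gridSnap (d : ℕ) (h : ℝ) : Measurable (gridSnap d h) := by
  refine (EuclideanSpace.equiv (Fin d) ℝ).symm.continuous.measurable.comp ?_
  refine measurable_pi_lambda _ fun i => ?_
  have hfl : Measurable fun x : Euc d => ⌊x i / h⌋ := Int.measurable_floor.comp (by fun_prop)
  have hcast : Measurable fun n : ℤ => (n : ℝ) := measurable_from_top
  exact ((hcast.comp hfl).const_mul h).add_const _

lemma volume_coordinate_eq {d : ℕ} (i : Fin d) (t : ℝ) : volume {x : Euc d | x i = t} = 0 := by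
  have hpi : volume {f : Fin d → ℝ | f i = t} = 0 := by
    rw [volume_pi]
    exact Measure.pi_hyperplane (α := fun _ => ℝ) (fun _ => volume) i t
  exact (PiLp.volume_preserving_ofLp (Fin d)).quasiMeasurePreserving.preimage_null hpi

/-- Almost every point of the unit cube lies in an open cell of the grid. -/
lemma ae_mem_openCell {d L : ℕ} {h : ℝ} (hh : 0 < h) (hL : h * L = 1) :
    ∀ᵐ x ∂(volume.restrict (unitCube d)), ∃ k : Fin d → Fin L, x ∈ openCell (gridCenter h k) h := by
  have hgen : ∀ᵐ x : Euc d, ∀ i, ∀ n : ℤ, x i ≠ h * n :=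
    ae_all_iff.2 fun i => ae_all_iff.2 fun n => by
      rw [ae_iff]
      simpa using volume_coordinate_eq i (h * n)
  filter_upwards [ae_restrict_mem (isOpen_unitCube d).measurableSet, ae_restrict_of_ae hgen]
    with x hx hne
  have hfl : ∀ i, ∃ n : Fin L, ⌊x i / h⌋ = ((n : ℕ) : ℤ) := fun i => by
    have h0 : 0 ≤ ⌊x i / h⌋ := Int.floor_nonneg.2 (div_nonneg (hx i).1.le hh.le)
    have h1 : ⌊x i / h⌋ < (L : ℤ) := by
      rw [Int.floor_lt, div_lt_iff₀ hh]
      have := (hx i).2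
      push_cast
      linarith
    obtain ⟨n, hn⟩ := Int.eq_ofNat_of_zero_le h0
    exact ⟨⟨n, by omega⟩, hn⟩
  choose k hk using hfl
  refine ⟨k, fun i => ?_⟩
  change |x i - (h * (k i : ℝ) + h / 2)| < h / 2
  have hfi := Int.floor_eq_iff.1 (hk i)
  rw [le_div_iff₀ hh, div_lt_iff₀ hh] at hfi
  have hn := hne i ((k i : ℕ) : ℤ)
  push_cast at hfi hn
  have hlt : h * ((k i : ℕ) : ℝ) < x i := lt_of_le_of_ne (by linarith [hfi.1]) hn.symm
  rw [abs_lt]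
  exact ⟨by linarith, by linarith [hfi.2]⟩

/-- Discretization error lower bound:
`W₂²(P,Q) ≤ W₂²(G_h#P, G_h#Q) + K h^{1+α}`. -/
theorem grid_discretization_lower (d : ℕ) (hd : 1 ≤ d) (α C : ℝ)
    (hα0 : 0 < α) (hα1 : α < 1) (hC : 1 < C) :
    ∃ K > (0 : ℝ), ∀ P Q : Measure (Euc d),
      IsProbabilityMeasure P → IsProbabilityMeasure Q →
      IsControlled d α C P Q →
      ∀ h : ℝ, 0 < h → (∃ L : ℕ, 0 < L ∧ h = 1 / L) →
        W2sq P Q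
          ≤ W2sq (P.map (gridSnap d h)) (Q.map (gridSnap d h)) + K * h ^ (1 + α) := by
  have hC0 : 0 < C := zero_lt_one.trans hC
  have hd0 : (0 : ℝ) < d := by exact_mod_cast hd
  refine ⟨4 * √d * (C ^ 2 * (√d / 2) ^ (1 + α)) + d, by positivity, ?_⟩
  rintro P Q hPp hQp ⟨μ, ν, hP, hQ, ⟨Cμ, Cν, hCμ, hCν, hsum, hμhol, hνhol⟩, hμ, hν⟩ h hh
    ⟨L, hL0, hL⟩
  have hL0' : (0 : ℝ) < L := by exact_mod_cast hL0
  have hhL : h * L = 1 := by rw [hL]; field_simp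
  have hh1 : h ≤ 1 := by
    have : (1 : ℝ) ≤ L := by exact_mod_cast hL0
    nlinarith
  have hμhol' : ∀ x ∈ unitCube d, ∀ y ∈ unitCube d, |μ x - μ y| ≤ C * ‖x - y‖ ^ α :=
    fun x hx y hy => (hμhol x hx y hy).trans
      (mul_le_mul_of_nonneg_right (by linarith) (by positivity))
  have hνhol' : ∀ x ∈ unitCube d, ∀ y ∈ unitCube d, |ν x - ν y| ≤ C * ‖x - y‖ ^ α :=
    fun x hx y hy => (hνhol x hx y hy).trans
      (mul_le_mul_of_nonneg_right (by linarith) (by positivity))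
  have hG := measurable_gridSnap d h
  let c : (Fin d → Fin L) → Euc d := gridCenter h
  let B : (Fin d → Fin L) → Set (Euc d) := fun k => openCell (c k) h
  have hsub : ∀ k, B k ⊆ unitCube d := openCell_gridCenter_subset hh hhL
  have hBm : ∀ k, MeasurableSet (B k) := fun k => (isOpen_openCell _ _).measurableSet
  have hP0 : ∀ k, P (B k) ≠ 0 := fun k =>
    openCell_measure_ne_zero hh hC0 hP (fun x hx => (hμ x hx).1) (hsub k)
  have hQ0 : ∀ k, Q (B k) ≠ 0 := fun k =>
    openCell_measure_ne_zero hh hC0 hQ (fun x hx => (hν x hx).1) (hsub k)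
  have hPc : ∀ᵐ x ∂P, ∃ k, x ∈ B k := by
    rw [hP]
    exact (withDensity_absolutelyContinuous _ _).ae_le (ae_mem_openCell hh hhL)
  have hQc : ∀ᵐ x ∂Q, ∃ k, x ∈ B k := by
    rw [hQ]
    exact (withDensity_absolutelyContinuous _ _).ae_le (ae_mem_openCell hh hhL)
  have hcost : ∀ i j, Integrable (fun p : Euc d × Euc d => ‖p.1 - p.2‖ ^ 2)
      ((ProbabilityTheory.cond P (B i)).prod (ProbabilityTheory.cond Q (B j))) ∧
      ∫ p, ‖p.1 - p.2‖ ^ 2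
      ∂((ProbabilityTheory.cond P (B i)).prod (ProbabilityTheory.cond Q (B j)))
        ≤ ‖c i - c j‖ ^ 2 + (4 * √d * (C ^ 2 * (√d * (h / 2)) ^ (1 + α)) +
          4 * (√d * (h / 2)) ^ 2) := fun i j => by
    have := ProbabilityTheory.cond_isProbabilityMeasure (hP0 i)
    have := ProbabilityTheory.cond_isProbabilityMeasure (hQ0 j)
    refine integral_prod_norm_sub_sq_le ?_ ?_
      (norm_integral_cond_openCell_le hh hC0 hα0 hP (fun x hx => (hμ x hx).1) hμhol' (hsub i))
      (norm_integral_cond_openCell_le hh hC0 hα0 hQ (fun x hx => (hν x hx).1) hνhol' (hsub j)) ?_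
    · filter_upwards [ProbabilityTheory.ae_cond_mem (hBm i)] with x hx
        using norm_sub_le_of_mem_openCell hh hx
    · filter_upwards [ProbabilityTheory.ae_cond_mem (hBm j)] with x hx
        using norm_sub_le_of_mem_openCell hh hx
    · rw [← mul_one √(d : ℝ)]
      refine norm_le_sqrt_mul_of_abs_le zero_le_one fun l => ?_
      have hi := hsub i (center_mem_openCell _ hh) l
      have hj := hsub j (center_mem_openCell _ hh) l
      rw [PiLp.sub_apply, abs_le]
      exact ⟨by linarith [hi.1, hj.2], by linarith [hi.2, hj.1]⟩
  have hsmall : 4 * √d * (C ^ 2 * (√d * (h / 2)) ^ (1 + α)) + 4 * (√d * (h / 2)) ^ 2 ≤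
      (4 * √d * (C ^ 2 * (√d / 2) ^ (1 + α)) + d) * h ^ (1 + α) := by
    have hpow : h ^ 2 ≤ h ^ (1 + α) := by
      rw [← Real.rpow_natCast]
      exact Real.rpow_le_rpow_of_exponent_ge hh hh1 (by push_cast; linarith)
    have hsplit : (√d * (h / 2)) ^ (1 + α) = (√d / 2) ^ (1 + α) * h ^ (1 + α) := by
      rw [← Real.mul_rpow (by positivity) hh.le]
      congr 1
      ring
    have hsq : 4 * (√d * (h / 2)) ^ 2 = d * h ^ 2 := by
      rw [mul_pow, Real.sq_sqrt hd0.le]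
      ring
    rw [hsplit, hsq, add_mul]
    refine add_le_add (le_of_eq (by ring)) (mul_le_mul_of_nonneg_left hpow hd0.le)
  rw [← sub_le_iff_le_add]
  refine le_csInf ?_ ?_
  · have := Measure.isProbabilityMeasure_map (μ := P) hG.aemeasurable
    have := Measure.isProbabilityMeasure_map (μ := Q) hG.aemeasurable
    exact ⟨_, (P.map (gridSnap d h)).prod (Q.map (gridSnap d h)),
      ⟨inferInstance, by simp, by simp⟩, rfl⟩
  · rintro _ ⟨π, hπ, rfl⟩
    obtain ⟨γ, hγ, hle⟩ := exists_lift_coupling hG (gridCenter_injective hh) hBm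
      (fun k x hx => gridSnap_of_mem_openCell hh k hx) hP0 hQ0 hPc hQc
      (fun i j => (hcost i j).1) (fun i j => (hcost i j).2) hπ
    have hW : W2sq P Q ≤ ∫ p, ‖p.1 - p.2‖ ^ 2 ∂γ := by
      refine csInf_le ⟨0, ?_⟩ ⟨γ, hγ, rfl⟩
      rintro _ ⟨γ', _, rfl⟩
      exact integral_nonneg fun p => by positivity
    linarith
end
end
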